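/- Let K be an infinite field, S = K[x_1,...,x_n], and fix an integer j. Let w ∈ Z_{≥0}^n, let M be a finitely generated graded S-module and J ⊆ S a homogeneous ideal. Then for a general λ ∈ K one has dim_K Tor_i^S(M, in_w(J))_j ≥ dim_K Tor_i^S(M, D_{λ,w}(J))_j for all i ≥ 0. -/

import Mathlib

open MvPolynomial TensorProduct CategoryTheory

noncomputable section

/-- The polynomial ring `S = K[x_1,...,x_n]`, standard graded. -/
abbrev PS (K : Type) [Field K] (n : ℕ) : Type := MvPolynomial (Fin n) K

variable (K : Type) [Field K] (n : ℕ)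

/-- An ideal of `S` is homogeneous if it contains all homogeneous components of its
elements. -/
def IsHomog (I : Ideal (PS K n)) : Prop :=
  ∀ f ∈ I, ∀ d : ℕ, MvPolynomial.homogeneousComponent d f ∈ I

/-- The change of coordinates of `S` induced by `g ∈ GL_n(K)`, determined by
`g(x_i) = ∑_j g_{ji} x_j`. -/
def coordChange (g : GL (Fin n) K) : PS K n →ₐ[K] PS K n :=
  MvPolynomial.aeval (fun i => ∑ j, ((g : Matrix (Fin n) (Fin n) K) j i) • MvPolynomial.X j)

/-- A property `P` holds for a general change of coordinates `g ∈ GL_n(K)` if there is a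
nonempty Zariski open subset `U ⊆ GL_n(K)` on which it holds; equivalently (as `GL_n(K)` is
an irreducible variety over the infinite field `K`) there is a nonzero polynomial `F` in the
matrix entries such that `P g` holds whenever `F` does not vanish at `g`. -/
def generally (P : GL (Fin n) K → Prop) : Prop :=
  ∃ F : MvPolynomial (Fin n × Fin n) K, F ≠ 0 ∧
    ∀ g : GL (Fin n) K,
      MvPolynomial.eval (fun p => (g : Matrix (Fin n) (Fin n) K) p.1 p.2) F ≠ 0 → P g

/-- The standard grading of `S = K[x_1,...,x_n]`, extended to `ℤ` (zero in negative
degrees). -/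
def polyGrade (d : ℤ) : Submodule K (PS K n) :=
  if 0 ≤ d then homogeneousSubmodule (Fin n) K d.toNat else ⊥

/-- The degree `d` component of the (internal) tensor-product grading on `A ⊗[K] B`. -/
def tensorGrade {A B : Type} [AddCommGroup A] [Module K A] [AddCommGroup B] [Module K B]
    (GA : ℤ → Submodule K A) (GB : ℤ → Submodule K B) (d : ℤ) :
    Submodule K (A ⊗[K] B) :=
  ⨆ p : ℤ, LinearMap.range (TensorProduct.map (GA p).subtype (GB (d - p)).subtype)

variable (N : Type) [AddCommGroup N] [Module K N] [Module (PS K n) N]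
  [IsScalarTower K (PS K n) N]

/-- The tower of `K`-vector spaces `D_i = S^{⊗ i} ⊗_K N` appearing in the bar complex
`M ⊗_K S^{⊗ i} ⊗_K N`, which computes `Tor^S_i(M, N)`. -/
def barD : ℕ → ModuleCat K
  | 0 => ModuleCat.of K N
  | (i + 1) => ModuleCat.of K (PS K n ⊗[K] (barD i))

/-- The internal `ℤ`-grading on `D_i = S^{⊗ i} ⊗_K N` induced by the standard grading of
`S` and a grading `GN` of `N`. -/
def barDGrade (GN : ℤ → Submodule K N) : (i : ℕ) → ℤ → Submodule K (barD K n N i)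
  | 0 => GN
  | (i + 1) => tensorGrade K (polyGrade K n) (barDGrade GN i)

/-- Scalar multiplication `S → N → N` as a `K`-bilinear map. -/
def smulBilin : PS K n →ₗ[K] N →ₗ[K] N :=
  LinearMap.mk₂ K (fun s x => s • x)
    (fun s₁ s₂ x => add_smul s₁ s₂ x)
    (fun c s x => smul_assoc c s x)
    (fun s x y => smul_add s x y)
    (fun c s x => (smul_comm c s x).symm)

/-- The "contraction" part of the bar differential, `c_i : D_{i+1} → D_i`, defined
recursively by `c_0(s ⊗ x) = s • x` and
`c_{i+1}(s ⊗ s' ⊗ t) = (s s') ⊗ t - s ⊗ c_i(s' ⊗ t)`. -/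
def barC : (i : ℕ) → ((barD K n N (i + 1)) →ₗ[K] (barD K n N i))
  | 0 => TensorProduct.lift (smulBilin K n N)
  | (i + 1) =>
      (TensorProduct.map (LinearMap.mul' K (PS K n)) LinearMap.id).comp
        (TensorProduct.assoc K (PS K n) (PS K n) (barD K n N i)).symm.toLinearMap
      - TensorProduct.map LinearMap.id (barC i)

variable (M : Type) [AddCommGroup M] [Module K M] [Module (PS K n) M]
  [IsScalarTower K (PS K n) M]

/-- Right scalar multiplication `M ⊗[K] S → M` as a `K`-linear map. -/
def smulMapM : M ⊗[K] PS K n →ₗ[K] M :=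
  TensorProduct.lift (LinearMap.mk₂ K (fun m s => s • m)
    (fun m₁ m₂ s => smul_add s m₁ m₂)
    (fun c m s => smul_comm s c m)
    (fun m s₁ s₂ => add_smul s₁ s₂ m)
    (fun c m s => smul_assoc c s m))

/-- The bar differential `b_i : M ⊗ D_{i+1} → M ⊗ D_i`,
`b(m ⊗ s ⊗ t) = (s • m) ⊗ t - m ⊗ c_i(s ⊗ t)`.  The complex
`⋯ → M ⊗_K S^{⊗ i} ⊗_K N → ⋯ → M ⊗_K S ⊗_K N → M ⊗_K N → 0`
is the bar complex `M ⊗_S Bar(S, N)`, whose `i`-th homology is `Tor^S_i(M, N)`;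
it is a complex of graded vector spaces with degree-preserving differentials. -/
def barB (i : ℕ) : (M ⊗[K] (barD K n N (i + 1))) →ₗ[K] (M ⊗[K] (barD K n N i)) :=
  (TensorProduct.map (smulMapM K n M) LinearMap.id).comp
      (TensorProduct.assoc K M (PS K n) (barD K n N i)).symm.toLinearMap
  - TensorProduct.map LinearMap.id (barC K n N i)

/-- `dim_K Tor_i^S(M, N)_j`, the dimension of the degree-`j` component of the graded module
`Tor_i^S(M, N)` for graded modules `M`, `N`: it is computed as the homology of the degree-`j`
strand of the bar complex, namely `dim (ker b_i)_j - dim (im b_{i+1})_j`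
(for `i = 0`, `dim (M ⊗_K N)_j - dim (im b_1)_j`). -/
def torStrandDim (GM : ℤ → Submodule K M) (GN : ℤ → Submodule K N) : ℕ → ℤ → ℕ
  | 0, j =>
      Module.finrank K ↥(tensorGrade K GM (barDGrade K n N GN 0) j) -
        Module.finrank K
          ↥(LinearMap.range (barB K n N M 0) ⊓ tensorGrade K GM (barDGrade K n N GN 0) j)
  | (i + 1), j =>
      Module.finrank K
          ↥(LinearMap.ker (barB K n N M i) ⊓
              tensorGrade K GM (barDGrade K n N GN (i + 1)) j) -
        Module.finrank K
          ↥(LinearMap.range (barB K n N M (i + 1)) ⊓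
              tensorGrade K GM (barDGrade K n N GN (i + 1)) j)

/-- The quotient grading on `S/J`. -/
def quotGrade (J : Ideal (PS K n)) : ℤ → Submodule K (PS K n ⧸ J) := fun d =>
  (polyGrade K n d).map (Ideal.Quotient.mkₐ K J).toLinearMap

/-- The grading on an ideal `I ⊆ S` viewed as an `S`-module. -/
def idealGrade (I : Ideal (PS K n)) : ℤ → Submodule K ↥I := fun d =>
  (polyGrade K n d).comap ((Submodule.subtype I).restrictScalars K)

/-- `dim_K Tor_i^S(S/I, S/J)_j`. -/
def torQQ (I J : Ideal (PS K n)) (i : ℕ) (j : ℤ) : ℕ :=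
  torStrandDim K n (PS K n ⧸ J) (PS K n ⧸ I) (quotGrade K n I) (quotGrade K n J) i j

/-- `dim_K Tor_i^S(I, S/J)_j`. -/
def torIQ (I J : Ideal (PS K n)) (i : ℕ) (j : ℤ) : ℕ :=
  torStrandDim K n (PS K n ⧸ J) ↥I (idealGrade K n I) (quotGrade K n J) i j

/-- A property `P` holds for a general (nonzero) scalar `λ ∈ K` if it holds on a nonempty
Zariski open subset of `K`; equivalently, outside the zero set of some nonzero polynomial.
(Since `{0}` is Zariski closed, it is equivalent to quantify over `λ ∈ Kˣ`.) -/
def generallyScalar (P : Kˣ → Prop) : Prop :=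
  ∃ F : Polynomial K, F ≠ 0 ∧ ∀ l : Kˣ, Polynomial.eval (l : K) F ≠ 0 → P l

/-- The diagonal change of coordinates `D_{λ,w} : x_i ↦ λ^{-w_i} x_i`. -/
def diagCoord (w : Fin n → ℕ) (l : Kˣ) : PS K n →ₐ[K] PS K n :=
  MvPolynomial.aeval (fun i => (((l⁻¹ : Kˣ) : K) ^ (w i)) • MvPolynomial.X i)

/-- The `w`-weight of an exponent vector: `∑ w_i m_i`. -/
def wdeg (w : Fin n → ℕ) (m : Fin n →₀ ℕ) : ℕ := ∑ i, w i * m i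

/-- The initial form `in_w(f)`: the sum of the terms of `f` of maximal `w`-weight. -/
def initialForm (w : Fin n → ℕ) (f : PS K n) : PS K n :=
  ∑ m ∈ f.support.filter (fun m => wdeg n w m = f.support.sup (wdeg n w)),
    MvPolynomial.monomial m (MvPolynomial.coeff m f)

/-- The initial ideal `in_w(I)` of `I` with respect to the weight order given by `w`. -/
def initialIdealW (w : Fin n → ℕ) (I : Ideal (PS K n)) : Ideal (PS K n) :=
  Ideal.span {g | ∃ f ∈ I, g = initialForm K n w f}

/-!
Both sides are read off the bar complex of `M` and an ideal, whose degree-`j` strands are finite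
dimensional. Lift each element of `in_w(J)` of degree `d` and weight `e` to an element of `J` with
terms of weight at most `e`, and homogenize the lift with respect to `w`. Specializing the
homogenizing variable to `l` gives linear maps `Θ_l : in_w(J) → S` which are polynomial in `l`, such
that `Θ_0` is the inclusion and `Θ_l` maps onto `D_{l,w}(J)` for `l ≠ 0`. Surjectivity shows that
the strands do not grow in dimension from `in_w(J)` to `D_{l,w}(J)`. Composing the differential with
`Θ` turns its rank into that of a polynomial family of linear maps, and such a rank can only go up
from `l = 0` to a general `l`. Hence the homology can only drop. A single open set works for all `i`
because the degree-`j` part of `Tor_i` vanishes for large `i`, by dimension shifting along the first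
syzygy module of `M`.
-/

section Gradings

theorem iSup_inf_eq_of_le {α ι : Type*} [CompleteLattice α] [IsModularLattice α] {G V : ι → α}
    (hG : iSupIndep G) (hV : ∀ i, V i ≤ G i) (i : ι) : (⨆ j, V j) ⊓ G i = V i := by
  have hsplit : ⨆ j, V j = V i ⊔ ⨆ (j) (_ : j ≠ i), V j := by
    refine le_antisymm (iSup_le fun j => ?_)
      (sup_le (le_iSup V i) (iSup₂_le fun j _ => le_iSup V j))
    by_cases h : j = i
    · exact h ▸ le_sup_left
    · exact le_sup_of_le_right (le_iSup₂_of_le j h le_rfl)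
  have hdisj : (⨆ (j) (_ : j ≠ i), V j) ⊓ G i = ⊥ :=
    ((hG i).mono_right (iSup₂_mono fun j _ => hV j)).symm.eq_bot
  rw [hsplit, sup_inf_assoc_of_le _ (hV i), hdisj, sup_bot_eq]

variable {K}
variable {A B C : Type} [AddCommGroup A] [Module K A] [AddCommGroup B] [Module K B]
  [AddCommGroup C] [Module K C]
variable {GA : ℤ → Submodule K A} {GB : ℤ → Submodule K B} {GC : ℤ → Submodule K C} {a b : ℤ}

/-- A linear map of graded vector spaces that is homogeneous of degree `0`. -/
def IsGradedMap (GA : ℤ → Submodule K A) (GB : ℤ → Submodule K B) (f : A →ₗ[K] B) : Prop :=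
  ∀ ⦃d x⦄, x ∈ GA d → f x ∈ GB d

theorem IsGradedMap.comp {g : B →ₗ[K] C} {f : A →ₗ[K] B} (hg : IsGradedMap GB GC g)
    (hf : IsGradedMap GA GB f) : IsGradedMap GA GC (g ∘ₗ f) :=
  fun _ _ hx => hg (hf hx)

theorem IsGradedMap.sub {f g : A →ₗ[K] B} (hf : IsGradedMap GA GB f)
    (hg : IsGradedMap GA GB g) : IsGradedMap GA GB (f - g) :=
  fun d _ hx => (GB d).sub_mem (hf hx) (hg hx)

theorem IsGradedMap.range_inf_eq_map {f : A →ₗ[K] B} (hf : IsGradedMap GA GB f)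
    (hA : ⨆ d, GA d = ⊤) (hB : iSupIndep GB) (d : ℤ) :
    LinearMap.range f ⊓ GB d = (GA d).map f := by
  have hle : ∀ e, (GA e).map f ≤ GB e := fun e => Submodule.map_le_iff_le_comap.mpr (@hf e)
  rw [← iSup_inf_eq_of_le hB hle, ← Submodule.map_iSup, hA, Submodule.map_top]

theorem isInternal_span_image {ι κ V : Type*} [AddCommGroup V] [Module K V] [DecidableEq κ]
    (v : Module.Basis ι K V) (deg : ι → κ) :
    DirectSum.IsInternal fun d => Submodule.span K (v '' (deg ⁻¹' {d})) := by
  refine DirectSum.isInternal_submodule_of_iSupIndep_of_iSup_eq_top (fun d => ?_) ?_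
  · simp_rw [← Submodule.span_iUnion₂, ← Set.image_iUnion₂]
    refine v.linearIndependent.disjoint_span_image ?_
    simp only [Set.disjoint_iUnion_right]
    exact fun e he => Disjoint.preimage _ (Set.disjoint_singleton.mpr he.symm)
  · rw [← Submodule.span_iUnion, ← Set.image_iUnion, ← Set.preimage_iUnion,
      Set.iUnion_singleton_eq_range, Set.range_id', Set.preimage_univ, Set.image_univ, v.span_eq]

theorem exists_homogeneous_basis.{u, v} {κ : Type u} {V : Type v} [AddCommGroup V] [Module K V]
    [DecidableEq κ] {G : κ → Submodule K V} (hG : DirectSum.IsInternal G) :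
    ∃ (ι : Type (max u v)) (v : Module.Basis ι K V) (deg : ι → κ),
      ∀ d, G d = Submodule.span K (v '' (deg ⁻¹' {d})) := by
  let u := fun d => Module.Basis.ofVectorSpace K (G d)
  refine ⟨_, hG.collectedBasis u, Sigma.fst, fun d => ?_⟩
  have himage : hG.collectedBasis u '' (Sigma.fst ⁻¹' {d}) =
      (G d).subtype '' Set.range (u d) := by
    rw [← Set.range_sigmaMk, ← Set.range_comp, ← Set.range_comp]
    congr 1
    ext i
    simp
  rw [himage, ← Submodule.map_span, (u d).span_eq, Submodule.map_top, Submodule.range_subtype]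

theorem tensorGrade_le_iff {d : ℤ} {P : Submodule K (A ⊗[K] B)} :
    tensorGrade K GA GB d ≤ P ↔
      ∀ p q, p + q = d → ∀ x ∈ GA p, ∀ y ∈ GB q, x ⊗ₜ[K] y ∈ P := by
  simp only [tensorGrade, TensorProduct.range_map, Submodule.range_subtype, iSup_le_iff,
    Submodule.map₂_le]
  constructor
  · rintro h p q rfl x hx y hy
    exact h p x hx y (by rwa [add_sub_cancel_left])
  · exact fun h p x hx y hy => h p (d - p) (add_sub_cancel p d) x hx y hy

theorem tmul_mem_tensorGrade {p q : ℤ} {x : A} (hx : x ∈ GA p) {y : B} (hy : y ∈ GB q) :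
    x ⊗ₜ[K] y ∈ tensorGrade K GA GB (p + q) :=
  tensorGrade_le_iff.mp le_rfl p q rfl x hx y hy

theorem IsGradedMap.lTensor {f : B →ₗ[K] C} (hf : IsGradedMap GB GC f) :
    IsGradedMap (tensorGrade K GA GB) (tensorGrade K GA GC) (f.lTensor A) := by
  refine fun d => tensorGrade_le_iff (P := (tensorGrade K GA GC d).comap _) |>.mpr ?_
  rintro p q rfl x hx y hy
  exact tmul_mem_tensorGrade hx (hf hy)

theorem IsGradedMap.rTensor {f : A →ₗ[K] B} (hf : IsGradedMap GA GB f) :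
    IsGradedMap (tensorGrade K GA GC) (tensorGrade K GB GC) (f.rTensor C) := by
  refine fun d => tensorGrade_le_iff (P := (tensorGrade K GB GC d).comap _) |>.mpr ?_
  rintro p q rfl x hx y hy
  exact tmul_mem_tensorGrade (hf hx) hy

theorem isGradedMap_assoc_symm :
    IsGradedMap (tensorGrade K GA (tensorGrade K GB GC)) (tensorGrade K (tensorGrade K GA GB) GC)
      (TensorProduct.assoc K A B C).symm.toLinearMap := by
  refine fun d => tensorGrade_le_iff
    (P := (tensorGrade K (tensorGrade K GA GB) GC d).comap _) |>.mpr ?_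
  rintro p q rfl x hx t ht
  refine tensorGrade_le_iff (P := (tensorGrade K (tensorGrade K GA GB) GC (p + q)).comap
    ((TensorProduct.assoc K A B C).symm.toLinearMap ∘ₗ TensorProduct.mk K A _ x)) |>.mpr ?_ ht
  rintro r s rfl y hy z hz
  have h := tmul_mem_tensorGrade (tmul_mem_tensorGrade hx hy) hz
  rwa [add_assoc] at h

theorem isInternal_tensorGrade (hA : DirectSum.IsInternal GA) (hB : DirectSum.IsInternal GB) :
    DirectSum.IsInternal (tensorGrade K GA GB) := by
  obtain ⟨ι, u, degA, hGA⟩ := exists_homogeneous_basis hA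
  obtain ⟨κ, v, degB, hGB⟩ := exists_homogeneous_basis hB
  have hspan : tensorGrade K GA GB = fun d => Submodule.span K
      (u.tensorProduct v '' ((fun i => degA i.1 + degB i.2) ⁻¹' {d})) := by
    refine funext fun d => le_antisymm (tensorGrade_le_iff.mpr ?_) (Submodule.span_le.mpr ?_)
    · rintro p q rfl x hx y hy
      rw [hGA] at hx
      rw [hGB] at hy
      have h := Submodule.apply_mem_map₂ (TensorProduct.mk K A B) hx hy
      rw [Submodule.map₂_span_span] at h
      refine Submodule.span_mono ?_ h
      rintro _ ⟨_, ⟨i, rfl, rfl⟩, _, ⟨k, rfl, rfl⟩, rfl⟩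
      exact ⟨(i, k), rfl, u.tensorProduct_apply v i k⟩
    · rintro _ ⟨⟨i, k⟩, rfl, rfl⟩
      rw [Module.Basis.tensorProduct_apply]
      refine tmul_mem_tensorGrade ?_ ?_
      · exact hGA _ ▸ Submodule.subset_span ⟨i, rfl, rfl⟩
      · exact hGB _ ▸ Submodule.subset_span ⟨k, rfl, rfl⟩
  exact hspan ▸ isInternal_span_image _ _

/-- A grading of a vector space by finite-dimensional subspaces which vanish in all degrees
below `a`. -/
structure IsLocallyFiniteGrading (GA : ℤ → Submodule K A) (a : ℤ) : Prop where
  isInternal : DirectSum.IsInternal GA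
  finiteDimensional : ∀ d, FiniteDimensional K (GA d)
  eq_bot : ∀ d < a, GA d = ⊥

theorem tensorGrade_eq_iSup_Icc (hA : ∀ d < a, GA d = ⊥) (hB : ∀ d < b, GB d = ⊥) (d : ℤ) :
    tensorGrade K GA GB d =
      ⨆ p ∈ Finset.Icc a (d - b), Submodule.map₂ (TensorProduct.mk K A B) (GA p) (GB (d - p)) := by
  refine le_antisymm (tensorGrade_le_iff.mpr ?_) (iSup₂_le fun p _ => Submodule.map₂_le.mpr ?_)
  · rintro p q rfl x hx y hy
    by_cases hp : p < a
    · rw [hA p hp, Submodule.mem_bot] at hx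
      rw [hx, TensorProduct.zero_tmul]
      exact zero_mem _
    by_cases hq : q < b
    · rw [hB q hq, Submodule.mem_bot] at hy
      rw [hy, TensorProduct.tmul_zero]
      exact zero_mem _
    refine Submodule.mem_iSup_of_mem p (Submodule.mem_iSup_of_mem ?_ ?_)
    · rw [Finset.mem_Icc]
      omega
    · exact Submodule.apply_mem_map₂ _ hx (by rwa [add_sub_cancel_left])
  · exact fun x hx y hy => tensorGrade_le_iff.mp le_rfl p (d - p) (add_sub_cancel p d) x hx y hy

theorem tensorGrade_eq_bot (hA : ∀ d < a, GA d = ⊥) (hB : ∀ d < b, GB d = ⊥) {d : ℤ}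
    (hd : d < a + b) : tensorGrade K GA GB d = ⊥ := by
  rw [tensorGrade_eq_iSup_Icc hA hB, Finset.Icc_eq_empty (by omega)]
  simp

theorem IsLocallyFiniteGrading.tensor (hA : IsLocallyFiniteGrading GA a)
    (hB : IsLocallyFiniteGrading GB b) :
    IsLocallyFiniteGrading (tensorGrade K GA GB) (a + b) where
  isInternal := isInternal_tensorGrade hA.isInternal hB.isInternal
  finiteDimensional d := by
    rw [tensorGrade_eq_iSup_Icc hA.eq_bot hB.eq_bot]
    exact Module.Finite.iff_fg.mpr <| Submodule.fg_biSup _ _ fun p _ =>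
      (Module.Finite.iff_fg.mp (hA.finiteDimensional p)).map₂ _
        (Module.Finite.iff_fg.mp (hB.finiteDimensional (d - p)))
  eq_bot _ := tensorGrade_eq_bot hA.eq_bot hB.eq_bot

theorem IsLocallyFiniteGrading.comap (hB : IsLocallyFiniteGrading GB b) {f : A →ₗ[K] B}
    (hf : Function.Injective f) (htop : ⨆ d, (GB d).comap f = ⊤) :
    IsLocallyFiniteGrading (fun d => (GB d).comap f) b where
  isInternal := by
    refine DirectSum.isInternal_submodule_of_iSupIndep_of_iSup_eq_top (fun d => ?_) htop
    have hdisj : Disjoint ((GB d).comap f) ((⨆ (e) (_ : e ≠ d), GB e).comap f) := by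
      rw [disjoint_iff, ← Submodule.comap_inf, (hB.isInternal.submodule_iSupIndep d).eq_bot,
        Submodule.comap_bot, LinearMap.ker_eq_bot.mpr hf]
    exact hdisj.mono_right (iSup₂_le fun e he => Submodule.comap_mono (le_iSup₂_of_le e he le_rfl))
  finiteDimensional d :=
    have := hB.finiteDimensional d
    FiniteDimensional.of_injective (f.restrict fun _ hx => hx : (GB d).comap f →ₗ[K] GB d)
      fun _ _ h => Subtype.ext (hf (congrArg Subtype.val h))
  eq_bot d hd := by
    rw [hB.eq_bot d hd, Submodule.comap_bot, LinearMap.ker_eq_bot.mpr hf]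

end Gradings

section Semicontinuity

open Polynomial in
/-- The functions `K → B` whose composite with every linear form on `B` is a polynomial function. -/
def polynomialCurves {K : Type*} [Field K] (B : Type*) [AddCommGroup B] [Module K B] :
    Submodule K (K → B) where
  carrier := {u | ∀ φ : Module.Dual K B, ∃ p : K[X], ∀ l, φ (u l) = p.eval l}
  zero_mem' φ := ⟨0, fun l => by simp⟩
  add_mem' hu hv φ := by
    obtain ⟨p, hp⟩ := hu φ
    obtain ⟨q, hq⟩ := hv φ
    exact ⟨p + q, fun l => by simp [hp, hq]⟩
  smul_mem' c u hu φ := by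
    obtain ⟨p, hp⟩ := hu φ
    exact ⟨c • p, fun l => by simp [hp]⟩

/-- A family of linear maps, parametrized by the affine line, whose values depend polynomially on
the parameter. -/
def IsPolynomialFamily {K A B : Type*} [Field K] [AddCommGroup A] [Module K A] [AddCommGroup B]
    [Module K B] (T : K → A →ₗ[K] B) : Prop :=
  ∀ x, LinearMap.pi T x ∈ polynomialCurves B

variable {K A B C : Type*} [Field K] [AddCommGroup A] [Module K A] [AddCommGroup B] [Module K B]
  [AddCommGroup C] [Module K C]

theorem linearMap_comp_mem_polynomialCurves {u : K → A} (hu : u ∈ polynomialCurves A)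
    (f : A →ₗ[K] B) : f ∘ u ∈ polynomialCurves B :=
  fun φ => hu (φ ∘ₗ f)

theorem pow_smul_mem_polynomialCurves (e : ℕ) (x : A) :
    (fun l : K => l ^ e • x) ∈ polynomialCurves A :=
  fun φ => ⟨Polynomial.monomial e (φ x), fun l => by
    rw [map_smul, smul_eq_mul, Polynomial.eval_monomial, mul_comm]⟩

theorem IsPolynomialFamily.comp_right {T : K → B →ₗ[K] C} (hT : IsPolynomialFamily T)
    (f : A →ₗ[K] B) : IsPolynomialFamily fun l => T l ∘ₗ f :=
  fun x => hT (f x)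

theorem IsPolynomialFamily.lTensor {T : K → A →ₗ[K] B} (hT : IsPolynomialFamily T) :
    IsPolynomialFamily fun l => (T l).lTensor C := by
  intro x
  induction x using TensorProduct.induction_on with
  | zero => simp only [map_zero, zero_mem]
  | add x y hx hy => simpa only [map_add] using add_mem hx hy
  | tmul c x => exact linearMap_comp_mem_polynomialCurves (hT x) (TensorProduct.mk K C B c)

theorem isPolynomialFamily_of_basis {ι : Type*} (v : Module.Basis ι K A) {T : K → A →ₗ[K] B}
    (hT : ∀ i, (fun l => T l (v i)) ∈ polynomialCurves B) : IsPolynomialFamily T := by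
  intro x
  have hspan : Submodule.span K (Set.range v) ≤
      (polynomialCurves B).comap (LinearMap.pi T) :=
    Submodule.span_le.mpr (Set.range_subset_iff.mpr hT)
  exact hspan (v.mem_span x)

theorem exists_ne_zero_linearIndependent {ι : Type*} [Finite ι] {u : ι → K → B}
    (hu : ∀ i, u i ∈ polynomialCurves B) {l₀ : K} (h₀ : LinearIndependent K fun i => u i l₀) :
    ∃ F : Polynomial K, F ≠ 0 ∧ ∀ l, F.eval l ≠ 0 → LinearIndependent K fun i => u i l := by
  classical
  have := Fintype.ofFinite ι
  obtain ⟨Φ, hΦ⟩ := (Fintype.linearCombination K fun i => u i l₀).exists_leftInverse_of_injective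
    (LinearMap.ker_eq_bot.mpr (linearIndependent_iff_injective_fintypeLinearCombination.mp h₀))
  have hΦu : ∀ i, Φ (u i l₀) = Pi.single i 1 := fun i => by
    simpa only [LinearMap.comp_apply, Fintype.linearCombination_apply_single, one_smul,
      LinearMap.id_apply] using LinearMap.congr_fun hΦ (Pi.single i 1)
  choose p hp using fun i m => hu i (LinearMap.proj m ∘ₗ Φ)
  have hdet : ∀ l, (Matrix.of p).det.eval l = (Matrix.of fun i => Φ (u i l)).det := fun l => by
    rw [← Polynomial.coe_evalRingHom, RingHom.map_det]
    congr 1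
    ext i m
    exact (hp i m l).symm
  refine ⟨(Matrix.of p).det, fun h => ?_, fun l hl => ?_⟩
  · have hone : (Matrix.of fun i => Φ (u i l₀)) = (1 : Matrix ι ι K) := by
      ext i m
      rw [Matrix.of_apply, hΦu, Matrix.one_apply, Pi.single_apply]
      simp only [eq_comm]
    simpa [h, hone] using hdet l₀
  · rw [hdet] at hl
    have hunit := (Matrix.isUnit_iff_isUnit_det _).mpr (isUnit_iff_ne_zero.mpr hl)
    exact LinearIndependent.of_comp Φ (Matrix.linearIndependent_rows_iff_isUnit.mpr hunit)

theorem IsPolynomialFamily.exists_finrank_map_le {T : K → A →ₗ[K] B} (hT : IsPolynomialFamily T)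
    (P : Submodule K A) [FiniteDimensional K P] (l₀ : K) :
    ∃ F : Polynomial K, F ≠ 0 ∧ ∀ l, F.eval l ≠ 0 →
      Module.finrank K (P.map (T l₀)) ≤ Module.finrank K (P.map (T l)) := by
  let y := Module.finBasis K (P.map (T l₀))
  choose x hxP hx using fun i => (y i).2
  have hindep : LinearIndependent K fun i => T l₀ (x i) := by
    simp_rw [hx]
    exact y.linearIndependent.map' (P.map (T l₀)).subtype (Submodule.ker_subtype _)
  obtain ⟨F, hF, h⟩ := exists_ne_zero_linearIndependent (fun i => hT (x i)) hindep
  refine ⟨F, hF, fun l hl => ?_⟩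
  have hli : LinearIndependent K fun i => (⟨T l (x i), x i, hxP i, rfl⟩ : P.map (T l)) :=
    LinearIndependent.of_comp (P.map (T l)).subtype (h l hl)
  simpa only [Fintype.card_fin] using hli.fintype_card_le_finrank

theorem finrank_map_add_finrank_ker_inf (f : A →ₗ[K] B) (P : Submodule K A)
    [FiniteDimensional K P] :
    Module.finrank K (P.map f) + Module.finrank K ↥(LinearMap.ker f ⊓ P) = Module.finrank K P := by
  have h := LinearMap.finrank_range_add_finrank_ker (f.domRestrict P)
  rwa [LinearMap.range_domRestrict, LinearMap.ker_domRestrict,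
    ← Submodule.finrank_map_subtype_eq, Submodule.map_comap_subtype, inf_comm] at h

end Semicontinuity

section BarComplex

variable {K} {n}
variable {A B C D D' : Type} [AddCommGroup A] [Module K A] [AddCommGroup B] [Module K B]
  [AddCommGroup C] [Module K C] [AddCommGroup D] [Module K D] [AddCommGroup D'] [Module K D']

theorem linearMap_ext_tmul_tmul_tmul {E : Type} [AddCommGroup E] [Module K E]
    {f g : A ⊗[K] (B ⊗[K] (C ⊗[K] D)) →ₗ[K] E}
    (h : ∀ x y z t, f (x ⊗ₜ (y ⊗ₜ (z ⊗ₜ t))) = g (x ⊗ₜ (y ⊗ₜ (z ⊗ₜ t)))) : f = g :=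
  TensorProduct.ext (LinearMap.ext fun x => TensorProduct.ext_threefold' (h x))

variable {N : Type} [AddCommGroup N] [Module K N] [Module (PS K n) N]
  [IsScalarTower K (PS K n) N]
variable {N' : Type} [AddCommGroup N'] [Module K N'] [Module (PS K n) N']
  [IsScalarTower K (PS K n) N']
variable (M : Type) [AddCommGroup M] [Module K M] [Module (PS K n) M]
  [IsScalarTower K (PS K n) M]
variable {M' : Type} [AddCommGroup M'] [Module K M'] [Module (PS K n) M']
  [IsScalarTower K (PS K n) M']

/-- The bar differential `m ⊗ s ⊗ t ↦ (s • m) ⊗ t - m ⊗ c(s ⊗ t)` for an arbitrary contraction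
`c : S ⊗ D → D`. It specializes both to `barB` and, for `M = S`, to the recursion step of `barC`. -/
def barDifferential (c : PS K n ⊗[K] D →ₗ[K] D) : M ⊗[K] (PS K n ⊗[K] D) →ₗ[K] M ⊗[K] D :=
  (smulMapM K n M).rTensor D ∘ₗ (TensorProduct.assoc K M (PS K n) D).symm.toLinearMap
    - c.lTensor M

theorem barB_eq_barDifferential (i : ℕ) : barB K n N M i = barDifferential M (barC K n N i) := rfl

variable {M}

theorem barDifferential_tmul (c : PS K n ⊗[K] D →ₗ[K] D) (m : M) (s : PS K n) (t : D) :
    barDifferential M c (m ⊗ₜ (s ⊗ₜ t)) = (s • m) ⊗ₜ t - m ⊗ₜ c (s ⊗ₜ t) := rfl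

theorem lift_smulBilin_tmul (s : PS K n) (x : N) :
    TensorProduct.lift (smulBilin K n N) (s ⊗ₜ x) = s • x := rfl

theorem barC_succ (i : ℕ) : barC K n N (i + 1) = barDifferential (PS K n) (barC K n N i) := by
  have hmul : LinearMap.mul' K (PS K n) = smulMapM K n (PS K n) :=
    TensorProduct.ext' fun s t => mul_comm s t
  change (LinearMap.mul' K (PS K n)).rTensor _ ∘ₗ _ - _ = _
  rw [hmul]
  rfl

theorem barDifferential_comp_barDifferential {c : PS K n ⊗[K] D →ₗ[K] D}
    (hc : c ∘ₗ barDifferential (PS K n) c = 0) :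
    barDifferential M c ∘ₗ barDifferential M (barDifferential (PS K n) c) = 0 := by
  refine linearMap_ext_tmul_tmul_tmul fun m s s' t => ?_
  have hassoc : c ((s' * s) ⊗ₜ t) = c (s ⊗ₜ c (s' ⊗ₜ t)) := by
    have h := LinearMap.congr_fun hc (s ⊗ₜ (s' ⊗ₜ t))
    rwa [LinearMap.comp_apply, barDifferential_tmul, map_sub, LinearMap.zero_apply,
      sub_eq_zero] at h
  simp only [LinearMap.comp_apply, barDifferential_tmul, map_sub, TensorProduct.tmul_sub,
    smul_eq_mul, hassoc, mul_smul, LinearMap.zero_apply]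
  abel

theorem lift_smulBilin_comp_barDifferential :
    TensorProduct.lift (smulBilin K n N) ∘ₗ
      barDifferential (PS K n) (TensorProduct.lift (smulBilin K n N)) = 0 := by
  refine TensorProduct.ext_threefold' fun s s' x => ?_
  simp only [LinearMap.comp_apply, barDifferential_tmul, map_sub, lift_smulBilin_tmul,
    smul_eq_mul, mul_smul, smul_comm s s' x, sub_self, LinearMap.zero_apply]

theorem barC_comp_barC (i : ℕ) : barC K n N i ∘ₗ barC K n N (i + 1) = 0 := by
  induction i with
  | zero =>
    rw [barC_succ]
    have h := lift_smulBilin_comp_barDifferential (K := K) (n := n) (N := N)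
    exact h
  | succ i ih =>
    rw [barC_succ i] at ih
    rw [barC_succ (i + 1), barC_succ i]
    exact barDifferential_comp_barDifferential ih

theorem barDifferential_comp_rTensor (c : PS K n ⊗[K] D →ₗ[K] D) (f : M →ₗ[PS K n] M') :
    barDifferential M' c ∘ₗ (f.restrictScalars K).rTensor (PS K n ⊗[K] D) =
      (f.restrictScalars K).rTensor D ∘ₗ barDifferential M c := by
  refine TensorProduct.ext_threefold' fun m s t => ?_
  simp only [LinearMap.comp_apply, LinearMap.rTensor_tmul, barDifferential_tmul, map_sub,
    LinearMap.restrictScalars_apply, map_smul]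

theorem barDifferential_comp_lTensor {c : PS K n ⊗[K] D →ₗ[K] D} {c' : PS K n ⊗[K] D' →ₗ[K] D'}
    {f : D →ₗ[K] D'} (hf : c' ∘ₗ f.lTensor (PS K n) = f ∘ₗ c) :
    barDifferential M c' ∘ₗ (f.lTensor (PS K n)).lTensor M =
      f.lTensor M ∘ₗ barDifferential M c := by
  refine TensorProduct.ext_threefold' fun m s t => ?_
  have h := LinearMap.congr_fun hf (s ⊗ₜ t)
  simp only [LinearMap.comp_apply, LinearMap.lTensor_tmul] at h
  simp only [LinearMap.comp_apply, LinearMap.lTensor_tmul, barDifferential_tmul, map_sub, h]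

section BarMap

variable {V V' V'' : Type} [AddCommGroup V] [Module K V] [AddCommGroup V'] [Module K V']
  [AddCommGroup V''] [Module K V'']

variable (n) in
/-- The map `S^{⊗ i} ⊗ V → S^{⊗ i} ⊗ V'` induced by a linear map `V → V'` of coefficients. -/
def barMap (f : V →ₗ[K] V') : (i : ℕ) → (barD K n V i →ₗ[K] barD K n V' i)
  | 0 => f
  | (i + 1) => (barMap f i).lTensor (PS K n)

theorem barMap_comp (g : V' →ₗ[K] V'') (f : V →ₗ[K] V') (i : ℕ) :
    barMap n (g ∘ₗ f) i = barMap n g i ∘ₗ barMap n f i := by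
  induction i with
  | zero => rfl
  | succ i ih => exact (congrArg _ ih).trans (LinearMap.lTensor_comp _ _ _)

theorem barMap_injective {f : V →ₗ[K] V'} (hf : Function.Injective f) (i : ℕ) :
    Function.Injective (barMap n f i) := by
  induction i with
  | zero => exact hf
  | succ i ih => exact Module.Flat.lTensor_preserves_injective_linearMap _ ih

theorem barMap_surjective {f : V →ₗ[K] V'} (hf : Function.Surjective f) (i : ℕ) :
    Function.Surjective (barMap n f i) := by
  induction i with
  | zero => exact hf
  | succ i ih => exact LinearMap.lTensor_surjective _ ih

theorem IsPolynomialFamily.barMap {T : K → V →ₗ[K] V'} (hT : IsPolynomialFamily T) (i : ℕ) :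
    IsPolynomialFamily fun l => barMap n (T l) i := by
  induction i with
  | zero => exact hT
  | succ i ih => exact ih.lTensor

theorem IsGradedMap.barMap {GV : ℤ → Submodule K V} {GV' : ℤ → Submodule K V'} {f : V →ₗ[K] V'}
    (hf : IsGradedMap GV GV' f) (i : ℕ) :
    IsGradedMap (barDGrade K n V GV i) (barDGrade K n V' GV' i) (barMap n f i) := by
  induction i with
  | zero => exact hf
  | succ i ih => exact ih.lTensor

theorem barC_comp_barMap (f : N →ₗ[PS K n] N') (i : ℕ) :
    barC K n N' i ∘ₗ (barMap n (f.restrictScalars K) i).lTensor (PS K n) =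
      barMap n (f.restrictScalars K) i ∘ₗ barC K n N i := by
  induction i with
  | zero => exact TensorProduct.ext' fun s (x : N) => (map_smul f s x).symm
  | succ i ih =>
    rw [barC_succ, barC_succ]
    exact barDifferential_comp_lTensor ih

theorem barB_comp_barMap (f : N →ₗ[PS K n] N') (i : ℕ) :
    barB K n N' M i ∘ₗ (barMap n (f.restrictScalars K) (i + 1)).lTensor M =
      (barMap n (f.restrictScalars K) i).lTensor M ∘ₗ barB K n N M i :=
  barDifferential_comp_lTensor (barC_comp_barMap f i)

end BarMap

section Gradings

instance : SetLike.GradedMonoid (polyGrade K n) where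
  one_mem := isHomogeneous_one (Fin n) K
  mul_mem p q s t hs ht := by
    unfold polyGrade at *
    split_ifs at hs ht with hp hq
    · rw [if_pos (add_nonneg hp hq), Int.toNat_add hp hq]
      exact IsHomogeneous.mul hs ht
    · rw [(Submodule.mem_bot K).mp ht, mul_zero]
      exact zero_mem _
    · rw [(Submodule.mem_bot K).mp hs, zero_mul]
      exact zero_mem _
    · rw [(Submodule.mem_bot K).mp hs, zero_mul]
      exact zero_mem _

variable {GM : ℤ → Submodule K M} {GN : ℤ → Submodule K N} {GD : ℤ → Submodule K D}

theorem isGradedMap_smulMapM [SetLike.GradedSMul (polyGrade K n) GM] :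
    IsGradedMap (tensorGrade K GM (polyGrade K n)) GM (smulMapM K n M) := by
  refine fun d => tensorGrade_le_iff (P := (GM d).comap _) |>.mpr ?_
  rintro p q rfl m hm s hs
  rw [add_comm]
  exact SetLike.GradedSMul.smul_mem hs hm

theorem isGradedMap_barDifferential [SetLike.GradedSMul (polyGrade K n) GM]
    {c : PS K n ⊗[K] D →ₗ[K] D} (hc : IsGradedMap (tensorGrade K (polyGrade K n) GD) GD c) :
    IsGradedMap (tensorGrade K GM (tensorGrade K (polyGrade K n) GD)) (tensorGrade K GM GD)
      (barDifferential M c) :=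
  (isGradedMap_smulMapM.rTensor.comp isGradedMap_assoc_symm).sub hc.lTensor

theorem isGradedMap_lift_smulBilin [SetLike.GradedSMul (polyGrade K n) GN] :
    IsGradedMap (tensorGrade K (polyGrade K n) GN) GN
      (TensorProduct.lift (smulBilin K n N)) := by
  refine fun d => tensorGrade_le_iff (P := (GN d).comap _) |>.mpr ?_
  rintro p q rfl s hs x hx
  exact SetLike.GradedSMul.smul_mem hs hx

theorem isGradedMap_barC [SetLike.GradedSMul (polyGrade K n) GN] (i : ℕ) :
    IsGradedMap (barDGrade K n N GN (i + 1)) (barDGrade K n N GN i) (barC K n N i) := by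
  induction i with
  | zero =>
    have h := isGradedMap_lift_smulBilin (K := K) (n := n) (GN := GN)
    exact h
  | succ i ih =>
    rw [barC_succ]
    exact isGradedMap_barDifferential ih

theorem isGradedMap_barB [SetLike.GradedSMul (polyGrade K n) GM]
    [SetLike.GradedSMul (polyGrade K n) GN] (i : ℕ) :
    IsGradedMap (tensorGrade K GM (barDGrade K n N GN (i + 1)))
      (tensorGrade K GM (barDGrade K n N GN i)) (barB K n N M i) :=
  isGradedMap_barDifferential (isGradedMap_barC i)

end Gradings

end BarComplex

section PolynomialGrading

variable {K} {n}

theorem polyGrade_natCast (d : ℕ) : polyGrade K n d = homogeneousSubmodule (Fin n) K d := by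
  rw [polyGrade, if_pos d.cast_nonneg, Int.toNat_natCast]

theorem polyGrade_eq_bot {d : ℤ} (hd : d < 0) : polyGrade K n d = ⊥ :=
  if_neg hd.not_ge

theorem mem_polyGrade_iff {d : ℤ} {f : PS K n} :
    f ∈ polyGrade K n d ↔ ∀ m ∈ f.support, (m.degree : ℤ) = d := by
  rcases lt_or_ge d 0 with hd | hd
  · rw [polyGrade_eq_bot hd, Submodule.mem_bot, ← support_eq_empty,
      Finset.eq_empty_iff_forall_notMem]
    exact forall_congr' fun m => ⟨fun h h' => absurd h' h, fun h h' => by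
      have := h h'
      omega⟩
  · obtain ⟨e, rfl⟩ := Int.eq_ofNat_of_zero_le hd
    simp only [polyGrade_natCast, mem_homogeneousSubmodule, IsHomogeneous, IsWeightedHomogeneous,
      Finsupp.degree_eq_weight_one, Nat.cast_inj, mem_support_iff]
    rfl

theorem polyGrade_eq_weightedHomogeneousSubmodule (d : ℤ) :
    polyGrade K n d = weightedHomogeneousSubmodule K (1 : Fin n → ℤ) d := by
  ext f
  rw [mem_polyGrade_iff, mem_weightedHomogeneousSubmodule]
  simp [IsWeightedHomogeneous, Finsupp.weight_apply, Finsupp.degree_apply, Finsupp.sum]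

theorem isLocallyFiniteGrading_polyGrade : IsLocallyFiniteGrading (polyGrade K n) 0 where
  isInternal := by
    rw [funext polyGrade_eq_weightedHomogeneousSubmodule]
    have := weightedDecomposition K (1 : Fin n → ℤ)
    exact DirectSum.Decomposition.isInternal _
  finiteDimensional d := by
    rcases lt_or_ge d 0 with hd | hd
    · rw [polyGrade_eq_bot hd]
      infer_instance
    · obtain ⟨e, rfl⟩ := Int.eq_ofNat_of_zero_le hd
      rw [polyGrade_natCast]
      exact Module.Finite.iff_fg.mpr (homogeneousSubmodule_fg _ _ e)
  eq_bot _ := polyGrade_eq_bot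

section Ideal

variable {I : Ideal (PS K n)}

theorem isLocallyFiniteGrading_idealGrade (hI : IsHomog K n I) :
    IsLocallyFiniteGrading (idealGrade K n I) 0 := by
  refine isLocallyFiniteGrading_polyGrade.comap Subtype.val_injective ?_
  refine Submodule.eq_top_iff'.mpr fun x => ?_
  have hx : ∑ d ∈ Finset.range ((x : PS K n).totalDegree + 1),
      (⟨homogeneousComponent d x, hI x x.2 d⟩ : I) = x := by
    ext1
    rw [Submodule.coe_sum, sum_homogeneousComponent]
  rw [← hx]
  refine Submodule.sum_mem _ fun d _ => Submodule.mem_iSup_of_mem (d : ℤ) ?_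
  rw [Submodule.mem_comap, polyGrade_natCast]
  exact homogeneousComponent_isHomogeneous d _

instance : SetLike.GradedSMul (polyGrade K n) (idealGrade K n I) where
  smul_mem _ _ _ _ hs hx := SetLike.mul_mem_graded (A := polyGrade K n) hs hx

end Ideal

theorem IsLocallyFiniteGrading.barDGrade {N : Type} [AddCommGroup N] [Module K N]
    {GN : ℤ → Submodule K N} {b : ℤ} (hN : IsLocallyFiniteGrading GN b) (i : ℕ) :
    IsLocallyFiniteGrading (barDGrade K n N GN i) b := by
  induction i with
  | zero => exact hN
  | succ i ih =>
    have h := isLocallyFiniteGrading_polyGrade (K := K) (n := n).tensor ih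
    rwa [zero_add] at h

end PolynomialGrading

section Vanishing

variable {K} {n}

theorem rTensor_apply_of_comp_eq_id_sub {A B C D : Type*} [AddCommGroup A]
    [Module K A] [AddCommGroup B] [Module K B] [AddCommGroup C] [Module K C] [AddCommGroup D]
    [Module K D] {σ : A →ₗ[K] B} {μ : B →ₗ[K] A} {ι : C →ₗ[K] B} {ρ : B →ₗ[K] C}
    (h : ι ∘ₗ ρ = LinearMap.id - σ ∘ₗ μ) {u : B ⊗[K] D} (hu : μ.rTensor D u = 0) :
    ι.rTensor D (ρ.rTensor D u) = u := by
  rw [← LinearMap.rTensor_comp_apply, h, LinearMap.rTensor_sub, LinearMap.sub_apply,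
    LinearMap.rTensor_comp_apply, hu, map_zero, sub_zero, LinearMap.rTensor_id_apply]

variable {D : Type} [AddCommGroup D] [Module K D]
variable {N : Type} [AddCommGroup N] [Module K N]
variable (M : Type) [AddCommGroup M] [Module K M]

/-- The map `(s ⊗ m) ⊗ x ↦ (1 ⊗ m) ⊗ (s ⊗ x)`, which contracts the bar complex of `S ⊗ M`. -/
def freeHomotopy (D : Type) [AddCommGroup D] [Module K D] :
    (PS K n ⊗[K] M) ⊗[K] D →ₗ[K] (PS K n ⊗[K] M) ⊗[K] (PS K n ⊗[K] D) :=
  (TensorProduct.mk K (PS K n) M 1).rTensor (PS K n ⊗[K] D) ∘ₗ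
    (TensorProduct.assoc K M (PS K n) D).toLinearMap ∘ₗ
    (TensorProduct.comm K (PS K n) M).toLinearMap.rTensor D

variable {M}
variable {GM : ℤ → Submodule K M} {GD : ℤ → Submodule K D} {GN : ℤ → Submodule K N}

theorem freeHomotopy_tmul (s : PS K n) (m : M) (x : D) :
    freeHomotopy M D ((s ⊗ₜ m) ⊗ₜ x) = (1 ⊗ₜ m) ⊗ₜ (s ⊗ₜ x) := rfl

instance : SetLike.GradedSMul (polyGrade K n) (tensorGrade K (polyGrade K n) GM) where
  smul_mem p q s x hs hx := by
    refine tensorGrade_le_iff (P := (tensorGrade K (polyGrade K n) GM (p + q)).comap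
      ((LinearMap.lsmul (PS K n) (PS K n ⊗[K] M) s).restrictScalars K)) |>.mpr ?_ hx
    rintro r t rfl y hy m hm
    rw [← add_assoc]
    exact tmul_mem_tensorGrade (SetLike.mul_mem_graded hs hy) hm

theorem isGradedMap_mk_one :
    IsGradedMap GM (tensorGrade K (polyGrade K n) GM) (TensorProduct.mk K (PS K n) M 1) := by
  intro d m hm
  have h := tmul_mem_tensorGrade (SetLike.one_mem_graded (polyGrade K n)) hm
  rwa [zero_add] at h

theorem tensorGrade_le_range_mk_one {d : ℤ} (hGM : ∀ e < d, GM e = ⊥) :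
    tensorGrade K (polyGrade K n) GM d ≤ LinearMap.range (TensorProduct.mk K (PS K n) M 1) := by
  refine tensorGrade_le_iff.mpr ?_
  rintro p q rfl s hs m hm
  rcases lt_trichotomy p 0 with hp | rfl | hp
  · rw [polyGrade_eq_bot hp, Submodule.mem_bot] at hs
    rw [hs, TensorProduct.zero_tmul]
    exact zero_mem _
  · have hs' : s ∈ (1 : Submodule K (PS K n)) := by
      rwa [← homogeneousSubmodule_zero, ← polyGrade_natCast]
    obtain ⟨c, rfl⟩ := Submodule.mem_one.mp hs'
    refine ⟨c • m, ?_⟩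
    rw [Algebra.algebraMap_eq_smul_one, TensorProduct.smul_tmul, TensorProduct.mk_apply]
  · rw [hGM q (by omega), Submodule.mem_bot] at hm
    rw [hm, TensorProduct.tmul_zero]
    exact zero_mem _

theorem barDGrade_eq_bot {b : ℤ} (hGN : ∀ d < b, GN d = ⊥) (i : ℕ) :
    ∀ d < b, barDGrade K n N GN i d = ⊥ := by
  induction i with
  | zero => exact hGN
  | succ i ih =>
    intro d hd
    refine tensorGrade_eq_bot (fun _ => polyGrade_eq_bot) ih ?_
    rwa [zero_add]

theorem barDifferential_freeHomotopy_add (c : PS K n ⊗[K] D →ₗ[K] D)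
    (x : (PS K n ⊗[K] M) ⊗[K] (PS K n ⊗[K] D)) :
    barDifferential (PS K n ⊗[K] M) (barDifferential (PS K n) c) (freeHomotopy M _ x) +
      freeHomotopy M _ (barDifferential (PS K n ⊗[K] M) c x) = x := by
  have h : barDifferential (PS K n ⊗[K] M) (barDifferential (PS K n) c) ∘ₗ freeHomotopy M _ +
      freeHomotopy M _ ∘ₗ barDifferential (PS K n ⊗[K] M) c = LinearMap.id := by
    refine TensorProduct.ext_fourfold' fun s m s' t => ?_
    simp only [LinearMap.add_apply,
      LinearMap.comp_apply, freeHomotopy_tmul, barDifferential_tmul, map_sub,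
      TensorProduct.smul_tmul', smul_eq_mul, mul_one, TensorProduct.tmul_sub,
      LinearMap.id_apply, mul_comm s' s]
    abel
  exact LinearMap.congr_fun h x

variable [Module (PS K n) M] [IsScalarTower K (PS K n) M]

variable (K n M) in
/-- The free cover `S ⊗ M → M`, `s ⊗ m ↦ s • m`, of an `S`-module. -/
def freeCover : PS K n ⊗[K] M →ₗ[PS K n] M :=
  LinearMap.liftBaseChange (PS K n) LinearMap.id

theorem freeCover_tmul (s : PS K n) (m : M) : freeCover K n M (s ⊗ₜ m) = s • m :=
  LinearMap.liftBaseChange_tmul _ _ s m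

variable (K n M) in
/-- The first syzygy module of `M` with respect to its free cover `S ⊗ M → M`. -/
def Syzygy : Type := LinearMap.ker (freeCover K n M)

instance : AddCommGroup (Syzygy K n M) :=
  inferInstanceAs (AddCommGroup (LinearMap.ker (freeCover K n M)))

instance : Module (PS K n) (Syzygy K n M) :=
  inferInstanceAs (Module (PS K n) (LinearMap.ker (freeCover K n M)))

instance : Module K (Syzygy K n M) :=
  inferInstanceAs (Module K (LinearMap.ker (freeCover K n M)))

instance : IsScalarTower K (PS K n) (Syzygy K n M) :=
  inferInstanceAs (IsScalarTower K (PS K n) (LinearMap.ker (freeCover K n M)))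

variable (K n M) in
/-- The inclusion of the first syzygy module. -/
def syzygyInclusion : Syzygy K n M →ₗ[PS K n] PS K n ⊗[K] M :=
  (LinearMap.ker (freeCover K n M)).subtype

variable (K n M) in
/-- The `K`-linear projection `x ↦ x - 1 ⊗ freeCover x` onto the first syzygy module. -/
def syzygyProjection : PS K n ⊗[K] M →ₗ[K] Syzygy K n M :=
  LinearMap.codRestrict ((LinearMap.ker (freeCover K n M)).restrictScalars K)
    (LinearMap.id - TensorProduct.mk K (PS K n) M 1 ∘ₗ (freeCover K n M).restrictScalars K)
    fun x => by simp [freeCover_tmul]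

theorem freeCover_comp_mk_one :
    (freeCover K n M).restrictScalars K ∘ₗ TensorProduct.mk K (PS K n) M 1 = LinearMap.id :=
  LinearMap.ext fun m => (freeCover_tmul 1 m).trans (one_smul _ m)

theorem freeCover_comp_syzygyInclusion :
    (freeCover K n M).restrictScalars K ∘ₗ (syzygyInclusion K n M).restrictScalars K = 0 :=
  LinearMap.ext fun x => x.2

theorem syzygyInclusion_comp_syzygyProjection :
    (syzygyInclusion K n M).restrictScalars K ∘ₗ syzygyProjection K n M =
      LinearMap.id - TensorProduct.mk K (PS K n) M 1 ∘ₗ (freeCover K n M).restrictScalars K := rfl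

theorem mem_range_barDifferential_of_rTensor_eq {M' : Type} [AddCommGroup M'] [Module K M']
    [Module (PS K n) M'] [IsScalarTower K (PS K n) M'] {ι : M' →ₗ[PS K n] PS K n ⊗[K] M}
    (hι : (freeCover K n M).restrictScalars K ∘ₗ ι.restrictScalars K = 0)
    {c : PS K n ⊗[K] D →ₗ[K] D} {z : M ⊗[K] (PS K n ⊗[K] D)} {v : M' ⊗[K] (PS K n ⊗[K] D)}
    (h : barDifferential (PS K n ⊗[K] M) c ((TensorProduct.mk K (PS K n) M 1).rTensor _ z) =
      (ι.restrictScalars K).rTensor _ (barDifferential M' c v)) :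
    z ∈ LinearMap.range (barDifferential M (barDifferential (PS K n) c)) := by
  set x := (TensorProduct.mk K (PS K n) M 1).rTensor _ z - (ι.restrictScalars K).rTensor _ v with hx
  have hcycle : barDifferential (PS K n ⊗[K] M) c x = 0 := by
    rw [hx, map_sub, h, sub_eq_zero]
    exact (LinearMap.congr_fun (barDifferential_comp_rTensor c ι) v).symm
  have hboundary := barDifferential_freeHomotopy_add c x
  rw [hcycle, map_zero, add_zero] at hboundary
  have hcover : ((freeCover K n M).restrictScalars K).rTensor _ x = z := by
    rw [hx, map_sub, ← LinearMap.rTensor_comp_apply, ← LinearMap.rTensor_comp_apply,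
      freeCover_comp_mk_one, hι, LinearMap.rTensor_id_apply,
      LinearMap.rTensor_zero, LinearMap.zero_apply, sub_zero]
  refine ⟨((freeCover K n M).restrictScalars K).rTensor _ (freeHomotopy M _ x), ?_⟩
  have hnat := LinearMap.congr_fun
    (barDifferential_comp_rTensor (barDifferential (PS K n) c) (freeCover K n M))
    (freeHomotopy M _ x)
  exact hnat.trans ((congrArg _ hboundary).trans hcover)

variable (K n) in
/-- The grading of the first syzygy module induced by the tensor product grading of `S ⊗ M`. -/
def syzygyGrade (GM : ℤ → Submodule K M) (d : ℤ) : Submodule K (Syzygy K n M) :=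
  (tensorGrade K (polyGrade K n) GM d).comap ((syzygyInclusion K n M).restrictScalars K)

instance : SetLike.GradedSMul (polyGrade K n) (syzygyGrade K n GM) where
  smul_mem _ _ _ _ hs hx :=
    SetLike.GradedSMul.smul_mem (A := polyGrade K n) (B := tensorGrade K (polyGrade K n) GM) hs hx

theorem isGradedMap_freeCover [SetLike.GradedSMul (polyGrade K n) GM] :
    IsGradedMap (tensorGrade K (polyGrade K n) GM) GM ((freeCover K n M).restrictScalars K) := by
  refine fun d => tensorGrade_le_iff (P := (GM d).comap _) |>.mpr ?_
  rintro p q rfl s hs m hm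
  rw [Submodule.mem_comap, LinearMap.restrictScalars_apply, freeCover_tmul]
  exact SetLike.GradedSMul.smul_mem hs hm

theorem isGradedMap_syzygyProjection [SetLike.GradedSMul (polyGrade K n) GM] :
    IsGradedMap (tensorGrade K (polyGrade K n) GM) (syzygyGrade K n GM) (syzygyProjection K n M) :=
  fun _ _ hx => Submodule.sub_mem _ hx (isGradedMap_mk_one (isGradedMap_freeCover hx))

theorem ker_inf_le_range_of_syzygy [SetLike.GradedSMul (polyGrade K n) GM]
    {c : PS K n ⊗[K] D →ₗ[K] D} (hcc : c ∘ₗ barDifferential (PS K n) c = 0)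
    (hc : IsGradedMap (tensorGrade K (polyGrade K n) GD) GD c) {j : ℤ}
    (h : LinearMap.ker (barDifferential (Syzygy K n M) c) ⊓
        tensorGrade K (syzygyGrade K n GM) (tensorGrade K (polyGrade K n) GD) j ≤
      LinearMap.range (barDifferential (Syzygy K n M) (barDifferential (PS K n) c))) :
    LinearMap.ker (barDifferential M (barDifferential (PS K n) c)) ⊓
        tensorGrade K GM
          (tensorGrade K (polyGrade K n) (tensorGrade K (polyGrade K n) GD)) j ≤
      LinearMap.range
        (barDifferential M (barDifferential (PS K n) (barDifferential (PS K n) c))) := by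
  rintro z ⟨hzker, hzgrade⟩
  let ι := (syzygyInclusion K n M).restrictScalars K
  let w := (TensorProduct.mk K (PS K n) M 1).rTensor _ z
  let u := barDifferential (PS K n ⊗[K] M) (barDifferential (PS K n) c) w
  have hcover : ((freeCover K n M).restrictScalars K).rTensor _ u = 0 := by
    have hnat := LinearMap.congr_fun
      (barDifferential_comp_rTensor (barDifferential (PS K n) c) (freeCover K n M)) w
    rw [LinearMap.comp_apply, LinearMap.comp_apply, ← LinearMap.rTensor_comp_apply,
      freeCover_comp_mk_one, LinearMap.rTensor_id_apply, LinearMap.mem_ker.mp hzker] at hnat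
    exact hnat.symm
  let y := (syzygyProjection K n M).rTensor _ u
  have hyu : ι.rTensor _ y = u :=
    rTensor_apply_of_comp_eq_id_sub syzygyInclusion_comp_syzygyProjection hcover
  have hyker : barDifferential (Syzygy K n M) c y = 0 := by
    have hι : Function.Injective (ι.rTensor D) :=
      Module.Flat.rTensor_preserves_injective_linearMap _ Subtype.val_injective
    refine hι ?_
    have hnat := LinearMap.congr_fun (barDifferential_comp_rTensor c (syzygyInclusion K n M)) y
    have hucycle : barDifferential (PS K n ⊗[K] M) c u = 0 :=
      LinearMap.congr_fun (barDifferential_comp_barDifferential hcc) w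
    rw [map_zero]
    exact hnat.symm.trans ((congrArg (barDifferential _ c) hyu).trans hucycle)
  have hygrade : y ∈ tensorGrade K (syzygyGrade K n GM) (tensorGrade K (polyGrade K n) GD) j :=
    isGradedMap_syzygyProjection.rTensor
      (isGradedMap_barDifferential (isGradedMap_barDifferential hc)
        (isGradedMap_mk_one.rTensor hzgrade))
  obtain ⟨v, hv⟩ := h ⟨hyker, hygrade⟩
  refine mem_range_barDifferential_of_rTensor_eq freeCover_comp_syzygyInclusion (v := v) ?_
  rw [hv]
  exact hyu.symm

theorem syzygyGrade_eq_bot {d : ℤ} (hGM : ∀ e < d, GM e = ⊥) :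
    syzygyGrade K n GM d = ⊥ := by
  refine (Submodule.eq_bot_iff _).mpr fun x hx => ?_
  obtain ⟨m, hm⟩ := tensorGrade_le_range_mk_one hGM hx
  have hm0 : m = 0 := by
    rw [← LinearMap.id_apply (R := K) m, ← freeCover_comp_mk_one (n := n), LinearMap.comp_apply,
      hm]
    exact x.2
  refine Subtype.ext (hm.symm.trans ?_)
  rw [hm0, map_zero]
  rfl

variable [Module (PS K n) N] [IsScalarTower K (PS K n) N] [SetLike.GradedSMul (polyGrade K n) GN]

theorem ker_barB_inf_le_range_barB {b : ℤ} (hGN : ∀ d < b, GN d = ⊥) (j : ℤ) (k : ℕ) :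
    ∀ (M : Type) [AddCommGroup M] [Module K M] [Module (PS K n) M] [IsScalarTower K (PS K n) M]
      (GM : ℤ → Submodule K M) [SetLike.GradedSMul (polyGrade K n) GM],
      (∀ d : ℤ, d + k + b ≤ j → GM d = ⊥) → ∀ i, k ≤ i →
      LinearMap.ker (barB K n N M i) ⊓ tensorGrade K GM (barDGrade K n N GN (i + 1)) j ≤
        LinearMap.range (barB K n N M (i + 1)) := by
  induction k with
  | zero =>
    intro M _ _ _ _ GM _ hGM i _
    rw [tensorGrade_eq_bot (a := j - b + 1) (b := b) (fun d hd => hGM d (by push_cast; omega))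
      (barDGrade_eq_bot hGN _) (by omega), inf_bot_eq]
    exact bot_le
  | succ k ih =>
    intro M _ _ _ _ GM _ hGM i hi
    obtain ⟨i, rfl⟩ := Nat.exists_eq_add_of_le' (Nat.one_le_of_lt hi)
    have hsyzygy := ih (Syzygy K n M) (syzygyGrade K n GM)
      (fun d hd => syzygyGrade_eq_bot fun e he => hGM e (by push_cast; omega)) i (by omega)
    have hcc := barC_comp_barC (K := K) (n := n) (N := N) i
    have hc : IsGradedMap (tensorGrade K (polyGrade K n) (barDGrade K n N GN i))
      (barDGrade K n N GN i) (barC K n N i) := isGradedMap_barC i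
    rw [barC_succ] at hcc
    simp only [barB_eq_barDifferential, barC_succ] at hsyzygy ⊢
    exact ker_inf_le_range_of_syzygy (GM := GM) (GD := barDGrade K n N GN i)
      (c := barC K n N i) hcc hc hsyzygy

end Vanishing

section Strands

variable {K} {n}
variable {N : Type} [AddCommGroup N] [Module K N]
variable {N₀ : Type} [AddCommGroup N₀] [Module K N₀]
variable {M : Type} [AddCommGroup M] [Module K M]
variable {GM : ℤ → Submodule K M} {GN : ℤ → Submodule K N} {GN₀ : ℤ → Submodule K N₀} {a b : ℤ}

variable (n) in
/-- The dimension of the degree-`j` strand of `M ⊗ S^{⊗ i} ⊗ N`. -/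
def strandDim (GM : ℤ → Submodule K M) (GN : ℤ → Submodule K N) (i : ℕ) (j : ℤ) : ℕ :=
  Module.finrank K (tensorGrade K GM (barDGrade K n N GN i) j)

theorem strandDim_le_of_surjective (hM : IsLocallyFiniteGrading GM a)
    (hN₀ : IsLocallyFiniteGrading GN₀ b) (hN : IsLocallyFiniteGrading GN b) {θ : N₀ →ₗ[K] N}
    (hθ : Function.Surjective θ) (hgr : IsGradedMap GN₀ GN θ) (i : ℕ) (j : ℤ) :
    strandDim n GM GN i j ≤ strandDim n GM GN₀ i j := by
  have := (hM.tensor (hN₀.barDGrade (n := n) i)).finiteDimensional j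
  have hmap := ((hgr.barMap (n := n) i).lTensor (GA := GM)).range_inf_eq_map
    (hM.tensor (hN₀.barDGrade i)).isInternal.submodule_iSup_eq_top
    (hM.tensor (hN.barDGrade i)).isInternal.submodule_iSupIndep j
  rw [LinearMap.range_eq_top.mpr (LinearMap.lTensor_surjective M (barMap_surjective hθ i)),
    top_inf_eq] at hmap
  rw [strandDim, hmap]
  exact Submodule.finrank_map_le _ _

variable [Module (PS K n) M] [IsScalarTower K (PS K n) M]
variable [Module (PS K n) N] [IsScalarTower K (PS K n) N]

variable (n) in
/-- The rank of the bar differential `barB i` on the degree-`j` strand of its source. -/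
def strandRank (GM : ℤ → Submodule K M) (GN : ℤ → Submodule K N) (i : ℕ) (j : ℤ) : ℕ :=
  Module.finrank K ((tensorGrade K GM (barDGrade K n N GN (i + 1)) j).map (barB K n N M i))

section Formula

variable [SetLike.GradedSMul (polyGrade K n) GM] [SetLike.GradedSMul (polyGrade K n) GN]

theorem finrank_range_barB_inf (hM : IsLocallyFiniteGrading GM a)
    (hN : IsLocallyFiniteGrading GN b) (i : ℕ) (j : ℤ) :
    Module.finrank K ↥(LinearMap.range (barB K n N M i) ⊓
      tensorGrade K GM (barDGrade K n N GN i) j) = strandRank n GM GN i j := by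
  rw [(isGradedMap_barB i).range_inf_eq_map
    (hM.tensor (hN.barDGrade (i + 1))).isInternal.submodule_iSup_eq_top
    (hM.tensor (hN.barDGrade i)).isInternal.submodule_iSupIndep, strandRank]

theorem torStrandDim_zero (hM : IsLocallyFiniteGrading GM a) (hN : IsLocallyFiniteGrading GN b)
    (j : ℤ) :
    torStrandDim K n N M GM GN 0 j = strandDim n GM GN 0 j - strandRank n GM GN 0 j := by
  rw [torStrandDim, finrank_range_barB_inf hM hN, strandDim]

theorem torStrandDim_succ (hM : IsLocallyFiniteGrading GM a) (hN : IsLocallyFiniteGrading GN b)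
    (i : ℕ) (j : ℤ) :
    torStrandDim K n N M GM GN (i + 1) j =
      strandDim n GM GN (i + 1) j - strandRank n GM GN i j - strandRank n GM GN (i + 1) j := by
  have := (hM.tensor (hN.barDGrade (n := n) (i + 1))).finiteDimensional j
  have hker := finrank_map_add_finrank_ker_inf (barB K n N M i)
    (tensorGrade K GM (barDGrade K n N GN (i + 1)) j)
  rw [torStrandDim, finrank_range_barB_inf hM hN, strandDim, ← hker]
  congr 1
  exact (Nat.add_sub_cancel_left ..).symm

theorem torStrandDim_succ_eq_zero (hM : IsLocallyFiniteGrading GM a)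
    (hN : IsLocallyFiniteGrading GN b) {i : ℕ} {j : ℤ} (hi : j < a + b + i) :
    torStrandDim K n N M GM GN (i + 1) j = 0 := by
  have := (hM.tensor (hN.barDGrade (n := n) (i + 1))).finiteDimensional j
  have hexact := ker_barB_inf_le_range_barB (K := K) (n := n) hN.eq_bot j i M GM
    (fun d hd => hM.eq_bot d (by omega)) i le_rfl
  rw [torStrandDim, Nat.sub_eq_zero_iff_le]
  exact Submodule.finrank_mono (le_inf hexact inf_le_right)

end Formula

section Comparison

variable {L : Type} [AddCommGroup L] [Module K L] [Module (PS K n) L]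
  [IsScalarTower K (PS K n) L]

theorem finrank_map_barB_comp_le_strandRank (hM : IsLocallyFiniteGrading GM a)
    (hN : IsLocallyFiniteGrading GN b) {θ : N₀ →ₗ[K] N} (hgr : IsGradedMap GN₀ GN θ)
    (ι : N →ₗ[PS K n] L) (i : ℕ) (j : ℤ) :
    Module.finrank K ((tensorGrade K GM (barDGrade K n N₀ GN₀ (i + 1)) j).map
      (barB K n L M i ∘ₗ (barMap n (ι.restrictScalars K ∘ₗ θ) (i + 1)).lTensor M)) ≤
      strandRank n GM GN i j := by
  have := (hM.tensor (hN.barDGrade (n := n) (i + 1))).finiteDimensional j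
  have hfactor : barB K n L M i ∘ₗ (barMap n (ι.restrictScalars K ∘ₗ θ) (i + 1)).lTensor M =
      (barMap n (ι.restrictScalars K) i).lTensor M ∘ₗ barB K n N M i ∘ₗ
        (barMap n θ (i + 1)).lTensor M := by
    rw [barMap_comp, LinearMap.lTensor_comp, ← LinearMap.comp_assoc, barB_comp_barMap,
      LinearMap.comp_assoc]
  have hstrand : (tensorGrade K GM (barDGrade K n N₀ GN₀ (i + 1)) j).map
      ((barMap n θ (i + 1)).lTensor M) ≤ tensorGrade K GM (barDGrade K n N GN (i + 1)) j :=
    Submodule.map_le_iff_le_comap.mpr fun _ hx => (hgr.barMap (i + 1)).lTensor hx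
  have hle := Submodule.map_mono (f := barB K n N M i) hstrand
  have := Submodule.finiteDimensional_of_le hle
  rw [hfactor, Submodule.map_comp, Submodule.map_comp]
  exact (Submodule.finrank_map_le _ _).trans (Submodule.finrank_mono hle)

variable [Module (PS K n) N₀] [IsScalarTower K (PS K n) N₀]

theorem finrank_map_barB_comp_eq_strandRank {ι : N →ₗ[PS K n] L} (hι : Function.Injective ι)
    (i : ℕ) (j : ℤ) :
    Module.finrank K ((tensorGrade K GM (barDGrade K n N GN (i + 1)) j).map
      (barB K n L M i ∘ₗ (barMap n (ι.restrictScalars K) (i + 1)).lTensor M)) =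
      strandRank n GM GN i j := by
  have hinj : Function.Injective ((barMap n (ι.restrictScalars K) i).lTensor M) :=
    Module.Flat.lTensor_preserves_injective_linearMap _ (barMap_injective hι i)
  rw [barB_comp_barMap, Submodule.map_comp]
  exact (Submodule.equivMapOfInjective _ hinj _).finrank_eq.symm

theorem exists_strandRank_le (hM : IsLocallyFiniteGrading GM a)
    (hN₀ : IsLocallyFiniteGrading GN₀ b) {Θ : K → N₀ →ₗ[K] L} (hΘ : IsPolynomialFamily Θ)
    {ι₀ : N₀ →ₗ[PS K n] L} (hι₀ : Function.Injective ι₀) (h₀ : Θ 0 = ι₀.restrictScalars K)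
    (i : ℕ) (j : ℤ) :
    ∃ F : Polynomial K, F ≠ 0 ∧ ∀ l, F.eval l ≠ 0 → strandRank n GM GN₀ i j ≤
      Module.finrank K ((tensorGrade K GM (barDGrade K n N₀ GN₀ (i + 1)) j).map
        (barB K n L M i ∘ₗ (barMap n (Θ l) (i + 1)).lTensor M)) := by
  have := (hM.tensor (hN₀.barDGrade (n := n) (i + 1))).finiteDimensional j
  have hT : IsPolynomialFamily fun l =>
      barB K n L M i ∘ₗ (barMap n (Θ l) (i + 1)).lTensor M :=
    fun x => linearMap_comp_mem_polynomialCurves ((hΘ.barMap (i + 1)).lTensor x) (barB K n L M i)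
  obtain ⟨F, hF, h⟩ := hT.exists_finrank_map_le
    (tensorGrade K GM (barDGrade K n N₀ GN₀ (i + 1)) j) 0
  refine ⟨F, hF, fun l hl => ?_⟩
  rw [← finrank_map_barB_comp_eq_strandRank hι₀, ← h₀]
  exact h l hl

variable [SetLike.GradedSMul (polyGrade K n) GM] [SetLike.GradedSMul (polyGrade K n) GN]
  [SetLike.GradedSMul (polyGrade K n) GN₀]

theorem torStrandDim_le_of_strandRank_le (hM : IsLocallyFiniteGrading GM a)
    (hN₀ : IsLocallyFiniteGrading GN₀ b) (hN : IsLocallyFiniteGrading GN b) {j : ℤ}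
    (hdim : ∀ i, strandDim n GM GN i j ≤ strandDim n GM GN₀ i j)
    (hrank : ∀ i ≤ (j - (a + b)).toNat + 1, strandRank n GM GN₀ i j ≤ strandRank n GM GN i j)
    (i : ℕ) :
    torStrandDim K n N M GM GN i j ≤ torStrandDim K n N₀ M GM GN₀ i j := by
  cases i with
  | zero =>
    rw [torStrandDim_zero hM hN, torStrandDim_zero hM hN₀]
    exact tsub_le_tsub (hdim 0) (hrank 0 (Nat.zero_le _))
  | succ i =>
    by_cases hi : j < a + b + i
    · exact (torStrandDim_succ_eq_zero hM hN hi).trans_le (Nat.zero_le _)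
    · rw [torStrandDim_succ hM hN, torStrandDim_succ hM hN₀]
      exact tsub_le_tsub (tsub_le_tsub (hdim _) (hrank i (by omega))) (hrank (i + 1) (by omega))

theorem exists_torStrandDim_le (hM : IsLocallyFiniteGrading GM a)
    (hN₀ : IsLocallyFiniteGrading GN₀ b) {Θ : K → N₀ →ₗ[K] L} (hΘ : IsPolynomialFamily Θ)
    {ι₀ : N₀ →ₗ[PS K n] L} (hι₀ : Function.Injective ι₀) (h₀ : Θ 0 = ι₀.restrictScalars K)
    (j : ℤ) :
    ∃ F : Polynomial K, F ≠ 0 ∧ ∀ l, F.eval l ≠ 0 →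
      ∀ {N : Type} [AddCommGroup N] [Module K N] [Module (PS K n) N] [IsScalarTower K (PS K n) N]
        {GN : ℤ → Submodule K N} [SetLike.GradedSMul (polyGrade K n) GN]
        (_ : IsLocallyFiniteGrading GN b) {θ : N₀ →ₗ[K] N} (_ : Function.Surjective θ)
        (_ : IsGradedMap GN₀ GN θ) {ι : N →ₗ[PS K n] L} (_ : ι.restrictScalars K ∘ₗ θ = Θ l)
        (i : ℕ), torStrandDim K n N M GM GN i j ≤ torStrandDim K n N₀ M GM GN₀ i j := by
  choose F hF h using fun i => exists_strandRank_le hM hN₀ hΘ hι₀ h₀ i j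
  refine ⟨∏ i ∈ Finset.range ((j - (a + b)).toNat + 2), F i,
    Finset.prod_ne_zero_iff.mpr fun i _ => hF i, fun l hl => ?_⟩
  rw [Polynomial.eval_prod, Finset.prod_ne_zero_iff] at hl
  intro N _ _ _ _ GN _ hN θ hθ hgr ι hfactor
  refine torStrandDim_le_of_strandRank_le hM hN₀ hN
    (fun i => strandDim_le_of_surjective hM hN₀ hN hθ hgr i j) fun i hi => ?_
  refine (h i l (hl i (Finset.mem_range.mpr (by omega)))).trans ?_
  rw [← hfactor]
  exact finrank_map_barB_comp_le_strandRank hM hN hgr ι i j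

end Comparison

end Strands

section Deformation

theorem exists_linearMap_lift {K A B : Type*} [Field K] [AddCommGroup A] [Module K A]
    [AddCommGroup B] [Module K B] (p : A →ₗ[K] B) (P : Submodule K A) :
    ∃ s : B →ₗ[K] P, ∀ y ∈ P.map p, p (s y) = y := by
  obtain ⟨r, hr⟩ := (p.submoduleMap P).exists_rightInverse_of_surjective
    (LinearMap.range_eq_top.mpr (p.submoduleMap_surjective P))
  obtain ⟨s, hs⟩ := r.exists_extend
  refine ⟨s, fun y hy => ?_⟩
  have hsy : s y = r ⟨y, hy⟩ := LinearMap.congr_fun hs ⟨y, hy⟩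
  rw [hsy]
  exact congrArg Subtype.val (LinearMap.congr_fun hr ⟨y, hy⟩)

theorem weightedHomogeneousComponent_monomial_mul {σ R Γ : Type*} [CommSemiring R]
    [AddCommMonoid Γ] [IsLeftCancelAdd Γ] (w : σ → Γ) (u : σ →₀ ℕ) (c : R) (q : Γ)
    (f : MvPolynomial σ R) :
    weightedHomogeneousComponent w (Finsupp.weight w u + q) (monomial u c * f) =
      monomial u c * weightedHomogeneousComponent w q f := by
  classical
  ext m
  simp only [coeff_weightedHomogeneousComponent, coeff_monomial_mul']
  by_cases hu : u ≤ m
  · obtain ⟨v, rfl⟩ := exists_add_of_le hu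
    simp only [add_tsub_cancel_left, map_add, add_right_inj, hu, if_true, mul_ite, mul_zero]
  · simp only [hu, if_false, ite_self]

variable {K} {n} {w : Fin n → ℕ} {J : Ideal (PS K n)} {q : ℕ × ℕ} {f g : PS K n} {l : Kˣ}

/-- The weights defining the bigrading of `S` by degree and `w`-weight. -/
def biweight (w : Fin n → ℕ) (i : Fin n) : ℕ × ℕ := (1, w i)

theorem weight_biweight (w : Fin n → ℕ) (m : Fin n →₀ ℕ) :
    Finsupp.weight (biweight w) m = (m.degree, wdeg n w m) := by
  rw [Finsupp.weight_apply, Finsupp.sum_fintype _ _ fun i => zero_smul ℕ (biweight w i)]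
  simp [biweight, wdeg, Prod.ext_iff, Prod.fst_sum, Prod.snd_sum, Finsupp.degree_eq_sum, mul_comm]

theorem weightedHomogeneousSubmodule_biweight_le_polyGrade :
    weightedHomogeneousSubmodule K (biweight w) q ≤ polyGrade K n q.1 := fun f hf =>
  mem_polyGrade_iff.mpr fun m hm => by
    rw [← hf (mem_support_iff.mp hm), weight_biweight]

section InitialPart

variable (w J q) in
/-- The elements of `J` which are homogeneous of degree `q.1` and whose terms have `w`-weight at
most `q.2`. -/
def filteredPart : Submodule K (PS K n) :=
  J.restrictScalars K ⊓ restrictSupport K {m | m.degree = q.1 ∧ wdeg n w m ≤ q.2}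

variable (w J q) in
/-- The component of bidegree `q` of the initial ideal of `J` (see
`restrictScalars_initialIdealW_eq_iSup`). -/
def initialPart : Submodule K (PS K n) :=
  (filteredPart w J q).map (weightedHomogeneousComponent (biweight w) q)

theorem initialPart_le_weightedHomogeneousSubmodule :
    initialPart w J q ≤ weightedHomogeneousSubmodule K (biweight w) q :=
  Submodule.map_le_iff_le_comap.mpr fun f _ => weightedHomogeneousComponent_mem _ f q

theorem homogeneousComponent_mem_filteredPart (hJ : IsHomog K n J) (hf : f ∈ J) {e : ℕ}
    (he : ∀ m ∈ f.support, wdeg n w m ≤ e) (d : ℕ) :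
    homogeneousComponent d f ∈ filteredPart w J (d, e) := by
  refine ⟨hJ f hf d, (mem_restrictSupport_iff K).mpr fun m hm => ?_⟩
  rw [Finset.mem_coe, mem_support_iff, coeff_homogeneousComponent, ne_eq, ite_eq_right_iff,
    Classical.not_imp] at hm
  exact ⟨hm.1, he m (mem_support_iff.mpr hm.2)⟩

theorem coeff_initialForm (w : Fin n → ℕ) (f : PS K n) (m : Fin n →₀ ℕ) :
    coeff m (initialForm K n w f) =
      if wdeg n w m = f.support.sup (wdeg n w) then coeff m f else 0 := by
  simp only [initialForm, coeff_sum, coeff_monomial, Finset.sum_ite_eq', Finset.mem_filter]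
  by_cases hm : m ∈ f.support
  · simp only [hm, true_and]
  · simp only [hm, false_and, notMem_support_iff.mp hm, ite_self]

theorem homogeneousComponent_initialForm (w : Fin n → ℕ) (f : PS K n) (d : ℕ) :
    homogeneousComponent d (initialForm K n w f) =
      weightedHomogeneousComponent (biweight w) (d, f.support.sup (wdeg n w))
        (homogeneousComponent d f) := by
  ext m
  simp only [coeff_homogeneousComponent, coeff_initialForm, coeff_weightedHomogeneousComponent,
    weight_biweight, Prod.mk.injEq]
  split_ifs <;> tauto

theorem initialForm_mem_iSup_initialPart (hJ : IsHomog K n J) (hf : f ∈ J) :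
    initialForm K n w f ∈ ⨆ q, initialPart w J q := by
  rw [← sum_homogeneousComponent (initialForm K n w f)]
  refine Submodule.sum_mem _ fun d _ =>
    Submodule.mem_iSup_of_mem (d, f.support.sup (wdeg n w)) ?_
  rw [homogeneousComponent_initialForm]
  exact Submodule.mem_map_of_mem
    (homogeneousComponent_mem_filteredPart hJ hf (fun m hm => Finset.le_sup hm) d)

theorem initialForm_eq_weightedHomogeneousComponent (hf : f ∈ filteredPart w J q)
    (h : weightedHomogeneousComponent (biweight w) q f ≠ 0) :
    initialForm K n w f = weightedHomogeneousComponent (biweight w) q f := by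
  have hsup : f.support.sup (wdeg n w) = q.2 := by
    obtain ⟨m, hm⟩ := ne_zero_iff.mp h
    rw [coeff_weightedHomogeneousComponent, weight_biweight, ne_eq, ite_eq_right_iff,
      Classical.not_imp] at hm
    refine le_antisymm (Finset.sup_le fun u hu => (hf.2 hu).2) ?_
    rw [← hm.1]
    exact Finset.le_sup (f := wdeg n w) (mem_support_iff.mpr hm.2)
  ext m
  rw [coeff_initialForm, coeff_weightedHomogeneousComponent, hsup, weight_biweight]
  by_cases hm : m ∈ f.support
  · simp only [Prod.ext_iff, (hf.2 hm).1, true_and]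
  · simp only [notMem_support_iff.mp hm, ite_self]

theorem initialPart_le_initialIdealW :
    initialPart w J q ≤ (initialIdealW K n w J).restrictScalars K := by
  rintro _ ⟨f, hf, rfl⟩
  by_cases h : weightedHomogeneousComponent (biweight w) q f = 0
  · rw [h]
    exact zero_mem _
  · exact Ideal.subset_span ⟨f, hf.1, (initialForm_eq_weightedHomogeneousComponent hf h).symm⟩

theorem monomial_mul_mem_initialPart (hg : g ∈ initialPart w J q) (u : Fin n →₀ ℕ) (c : K) :
    monomial u c * g ∈ initialPart w J (Finsupp.weight (biweight w) u + q) := by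
  obtain ⟨f, hf, rfl⟩ := hg
  refine ⟨monomial u c * f, ⟨J.mul_mem_left _ hf.1, ?_⟩,
    weightedHomogeneousComponent_monomial_mul ..⟩
  have hu : monomial u c ∈ restrictSupport K {u} :=
    (monomial_mem_restrictSupport K).mpr (Or.inl rfl)
  have hmul := Submodule.mul_mem_mul hu hf.2
  rw [← restrictSupport_add] at hmul
  refine restrictSupport_mono K ?_ hmul
  rintro _ ⟨v, rfl, m, ⟨hdeg, hwt⟩, rfl⟩
  have hadd := map_add (Finsupp.weight (biweight w)) v m
  simp only [weight_biweight, Prod.mk_add_mk, Prod.mk.injEq] at hadd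
  simp only [weight_biweight, Set.mem_ofPred_eq, Prod.fst_add, Prod.snd_add]
  omega

theorem mul_mem_iSup_initialPart (p : PS K n) (hg : g ∈ ⨆ q, initialPart w J q) :
    p * g ∈ ⨆ q, initialPart w J q := by
  rw [as_sum p, Finset.sum_mul]
  refine Submodule.sum_mem _ fun u _ => ?_
  have hle : ⨆ q, initialPart w J q ≤
      (⨆ q, initialPart w J q).comap (LinearMap.mulLeft K (monomial u (coeff u p))) :=
    iSup_le fun q x hx => Submodule.mem_iSup_of_mem _ (monomial_mul_mem_initialPart hx u _)
  exact hle hg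

theorem restrictScalars_initialIdealW_eq_iSup (hJ : IsHomog K n J) :
    (initialIdealW K n w J).restrictScalars K = ⨆ q, initialPart w J q := by
  refine le_antisymm (fun g hg => ?_) (iSup_le fun q => initialPart_le_initialIdealW)
  induction hg using Submodule.span_induction with
  | mem g hg =>
    obtain ⟨f, hf, rfl⟩ := hg
    exact initialForm_mem_iSup_initialPart hJ hf
  | zero => exact zero_mem _
  | add x y _ _ hx hy => exact add_mem hx hy
  | smul p x _ hx => exact mul_mem_iSup_initialPart p hx

theorem isHomog_initialIdealW (hJ : IsHomog K n J) : IsHomog K n (initialIdealW K n w J) := by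
  intro g hg d
  have hle : ⨆ q, initialPart w J q ≤
      ((initialIdealW K n w J).restrictScalars K).comap (homogeneousComponent d) := by
    refine iSup_le fun q x hx => ?_
    have hhom := weightedHomogeneousSubmodule_biweight_le_polyGrade
      (initialPart_le_weightedHomogeneousSubmodule hx)
    rw [polyGrade_natCast] at hhom
    rw [Submodule.mem_comap, homogeneousComponent_of_mem hhom]
    split_ifs
    · exact initialPart_le_initialIdealW hx
    · exact zero_mem _
  rw [← restrictScalars_initialIdealW_eq_iSup hJ] at hle
  exact hle hg

end InitialPart

section DiagonalChange

theorem diagCoord_monomial (w : Fin n → ℕ) (l : Kˣ) (m : Fin n →₀ ℕ) (c : K) :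
    diagCoord K n w l (monomial m c) = ((l⁻¹ : Kˣ) : K) ^ wdeg n w m • monomial m c := by
  rw [diagCoord, aeval_monomial, Finsupp.prod_fintype _ _ fun i => pow_zero _, monomial_eq,
    Finsupp.prod_fintype _ _ fun i => pow_zero _]
  simp only [smul_eq_C_mul, mul_pow, Finset.prod_mul_distrib, wdeg, ← Finset.prod_pow_eq_pow_sum,
    algebraMap_eq, map_prod, map_pow, pow_mul]
  ring

theorem coeff_diagCoord (w : Fin n → ℕ) (l : Kˣ) (f : PS K n) (m : Fin n →₀ ℕ) :
    coeff m (diagCoord K n w l f) = ((l⁻¹ : Kˣ) : K) ^ wdeg n w m * coeff m f := by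
  induction f using MvPolynomial.induction_on' with
  | monomial u c =>
    rw [diagCoord_monomial, coeff_smul, smul_eq_mul, coeff_monomial]
    split_ifs with h
    · rw [h]
    · rw [mul_zero, mul_zero]
  | add f g hf hg => rw [map_add, coeff_add, coeff_add, hf, hg, mul_add]

theorem diagCoord_surjective (w : Fin n → ℕ) (l : Kˣ) :
    Function.Surjective (diagCoord K n w l) := fun f => ⟨diagCoord K n w l⁻¹ f, by
  ext m
  rw [coeff_diagCoord, coeff_diagCoord, ← mul_assoc, ← mul_pow, inv_inv, Units.inv_mul, one_pow,
    one_mul]⟩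

theorem mem_map_diagCoord {x : PS K n} :
    x ∈ Ideal.map (diagCoord K n w l) J ↔ ∃ f ∈ J, diagCoord K n w l f = x :=
  Ideal.mem_map_iff_of_surjective _ (diagCoord_surjective w l)

theorem isHomog_map_diagCoord (hJ : IsHomog K n J) (l : Kˣ) :
    IsHomog K n (Ideal.map (diagCoord K n w l) J) := by
  intro x hx d
  obtain ⟨f, hf, rfl⟩ := mem_map_diagCoord.mp hx
  refine mem_map_diagCoord.mpr ⟨_, hJ f hf d, ?_⟩
  ext m
  rw [coeff_diagCoord, coeff_homogeneousComponent, coeff_homogeneousComponent, coeff_diagCoord,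
    mul_ite, mul_zero]

end DiagonalChange

section Family

variable (w q) in
/-- On polynomials of degree `q.1` and of `w`-weight at most `q.2`, the homogenization with respect
to the weight `w` up to weight `q.2`, with the homogenizing variable specialized to `l`. -/
def homogenization (l : K) : PS K n →ₗ[K] PS K n :=
  ∑ k ∈ Finset.range (q.2 + 1),
    l ^ (q.2 - k) • weightedHomogeneousComponent (biweight w) (q.1, k)

theorem homogenization_zero :
    homogenization w q (0 : K) = weightedHomogeneousComponent (biweight w) q := by
  rw [homogenization, Finset.sum_eq_single_of_mem q.2 (Finset.self_mem_range_succ _)]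
  · rw [Nat.sub_self, pow_zero, one_smul]
  · intro k hk hne
    rw [Finset.mem_range] at hk
    rw [zero_pow (by omega), zero_smul]

theorem isPolynomialFamily_homogenization :
    IsPolynomialFamily fun l : K => homogenization w q l := by
  intro f
  have h := Submodule.sum_mem (polynomialCurves (PS K n)) fun k (_ : k ∈ Finset.range (q.2 + 1)) =>
    pow_smul_mem_polynomialCurves (K := K) (q.2 - k)
      (weightedHomogeneousComponent (biweight w) (q.1, k) f)
  convert h using 1
  ext1 l
  simp only [homogenization, LinearMap.pi_apply, LinearMap.sum_apply, LinearMap.smul_apply,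
    Finset.sum_apply]

theorem homogenization_mem_polyGrade (l : K) (f : PS K n) :
    homogenization w q l f ∈ polyGrade K n q.1 := by
  rw [homogenization, LinearMap.sum_apply]
  exact Submodule.sum_mem _ fun k _ => Submodule.smul_mem _ _ <|
    weightedHomogeneousSubmodule_biweight_le_polyGrade (q := (q.1, k))
      (weightedHomogeneousComponent_mem _ f _)

theorem homogenization_eq_smul_diagCoord (hf : f ∈ filteredPart w J q) (l : Kˣ) :
    homogenization w q (l : K) f = (l : K) ^ q.2 • diagCoord K n w l f := by
  ext m
  simp only [homogenization, LinearMap.sum_apply, LinearMap.smul_apply, coeff_sum, coeff_smul,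
    coeff_weightedHomogeneousComponent, weight_biweight, coeff_diagCoord, smul_eq_mul]
  by_cases hm : m ∈ f.support
  · obtain ⟨hdeg, hwt⟩ := hf.2 hm
    simp only [Prod.mk.injEq, hdeg, true_and, mul_ite, mul_zero, Finset.sum_ite_eq]
    rw [if_pos (Finset.mem_range_succ_iff.mpr hwt), ← mul_assoc, pow_sub₀ _ l.ne_zero hwt,
      Units.val_inv_eq_inv_val, inv_pow]
  · simp only [notMem_support_iff.mp hm, ite_self, mul_zero, Finset.sum_const_zero]

variable (w J q) in
/-- A linear choice of elements of the filtered part of `J` with prescribed component of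
bidegree `q`. -/
def initialLift : PS K n →ₗ[K] filteredPart w J q :=
  (exists_linearMap_lift (weightedHomogeneousComponent (biweight w) q) (filteredPart w J q)).choose

theorem weightedHomogeneousComponent_initialLift (hg : g ∈ initialPart w J q) :
    weightedHomogeneousComponent (biweight w) q (initialLift w J q g : PS K n) = g :=
  (exists_linearMap_lift (weightedHomogeneousComponent (biweight w) q)
    (filteredPart w J q)).choose_spec g hg

variable (w J) in
/-- The deformation of the inclusion `in_w(J) ⊆ S`, its value at `l = 0`, into linear maps onto
`D_{l,w}(J)`: an initial form of bidegree `q` is lifted to `J` and then homogenized. It is defined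
on monomials in order to be linear in all of `S`. -/
def deformation (l : K) : PS K n →ₗ[K] PS K n :=
  (basisMonomials (Fin n) K).constr K fun m =>
    homogenization w (Finsupp.weight (biweight w) m) l
        (initialLift w J (Finsupp.weight (biweight w) m) (monomial m 1))

theorem deformation_monomial (l : K) (m : Fin n →₀ ℕ) (c : K) :
    deformation w J l (monomial m c) =
      homogenization w (Finsupp.weight (biweight w) m) l
        (initialLift w J (Finsupp.weight (biweight w) m) (monomial m c)) := by
  have hone := (basisMonomials (Fin n) K).constr_basis K (fun m =>
    homogenization w (Finsupp.weight (biweight w) m) l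
        (initialLift w J (Finsupp.weight (biweight w) m) (monomial m 1))) m
  rw [coe_basisMonomials] at hone
  rw [show monomial m c = c • monomial m 1 by rw [smul_monomial, smul_eq_mul, mul_one]]
  simp only [map_smul, Submodule.coe_smul]
  exact congrArg (c • ·) hone

theorem deformation_of_mem (hg : g ∈ weightedHomogeneousSubmodule K (biweight w) q) (l : K) :
    deformation w J l g = homogenization w q l (initialLift w J q g) := by
  induction hg using IsWeightedHomogeneous.induction_on with
  | zero => simp only [map_zero, Submodule.coe_zero]
  | add x y _ _ hx hy => simp only [map_add, Submodule.coe_add, hx, hy]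
  | monomial m c hm =>
    subst hm
    exact deformation_monomial ..

theorem isPolynomialFamily_deformation : IsPolynomialFamily fun l : K => deformation w J l := by
  refine isPolynomialFamily_of_basis (basisMonomials (Fin n) K) fun m => ?_
  simp only [coe_basisMonomials, deformation_monomial]
  exact isPolynomialFamily_homogenization _

theorem deformation_zero (hJ : IsHomog K n J) (hg : g ∈ initialIdealW K n w J) :
    deformation w J 0 g = g := by
  have hle : ⨆ q, initialPart w J q ≤ LinearMap.eqLocus (deformation w J 0) LinearMap.id := by
    refine iSup_le fun q x hx => ?_
    rw [LinearMap.mem_eqLocus, deformation_of_mem (initialPart_le_weightedHomogeneousSubmodule hx),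
      homogenization_zero, weightedHomogeneousComponent_initialLift hx, LinearMap.id_apply]
  rw [← restrictScalars_initialIdealW_eq_iSup hJ] at hle
  exact hle hg

theorem isGradedMap_deformation (l : K) :
    IsGradedMap (polyGrade K n) (polyGrade K n) (deformation w J l) := by
  intro d g hg
  rw [as_sum g, map_sum]
  refine Submodule.sum_mem _ fun m hm => ?_
  have hdeg : (Finsupp.weight (biweight w) m).1 = d := by
    rw [weight_biweight, mem_polyGrade_iff.mp hg m hm]
  rw [deformation_monomial, ← hdeg]
  exact homogenization_mem_polyGrade l _

theorem deformation_mem_map_diagCoord (g : PS K n) :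
    deformation w J l g ∈ Ideal.map (diagCoord K n w l) J := by
  rw [as_sum g, map_sum]
  refine Ideal.sum_mem _ fun m _ => ?_
  rw [deformation_monomial, homogenization_eq_smul_diagCoord (initialLift w J _ _).2]
  exact Submodule.smul_of_tower_mem _ _ (Ideal.mem_map_of_mem _ (initialLift w J _ _).2.1)

theorem diagCoord_initialLift_mem_map_deformation (hg : g ∈ initialPart w J q) :
    diagCoord K n w l (initialLift w J q g) ∈
      ((initialIdealW K n w J).restrictScalars K).map (deformation w J (l : K)) := by
  have h := Submodule.mem_map_of_mem (f := deformation w J (l : K))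
    (initialPart_le_initialIdealW hg)
  rw [deformation_of_mem (initialPart_le_weightedHomogeneousSubmodule hg),
    homogenization_eq_smul_diagCoord (initialLift w J q g).2] at h
  exact (Submodule.smul_mem_iff _ (pow_ne_zero _ l.ne_zero)).mp h

theorem wdeg_lt_of_mem_support (hf : f ∈ filteredPart w J q)
    (h : weightedHomogeneousComponent (biweight w) q f = 0) {m : Fin n →₀ ℕ} (hm : m ∈ f.support) :
    wdeg n w m < q.2 := by
  refine lt_of_le_of_ne (hf.2 hm).2 fun hwt => mem_support_iff.mp hm ?_
  have hcoeff := congrArg (coeff m) h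
  rwa [coeff_weightedHomogeneousComponent, weight_biweight, hwt, (hf.2 hm).1, if_pos rfl,
    coeff_zero] at hcoeff

theorem diagCoord_mem_map_deformation_of_mem_filteredPart {d e : ℕ}
    (hf : f ∈ filteredPart w J (d, e)) :
    diagCoord K n w l f ∈
      ((initialIdealW K n w J).restrictScalars K).map (deformation w J (l : K)) := by
  induction e using Nat.strong_induction_on generalizing f with
  | _ e ih =>
  have hg : weightedHomogeneousComponent (biweight w) (d, e) f ∈ initialPart w J (d, e) :=
    Submodule.mem_map_of_mem hf
  let f₁ := initialLift w J (d, e) (weightedHomogeneousComponent (biweight w) (d, e) f)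
  have hr : f - f₁ ∈ filteredPart w J (d, e) := sub_mem hf f₁.2
  -- The difference between `f` and the lift of its initial form has smaller weight.
  have hlt : ∀ m ∈ (f - f₁ : PS K n).support, wdeg n w m < e := fun m hm =>
    wdeg_lt_of_mem_support hr
      (by rw [map_sub, weightedHomogeneousComponent_initialLift hg, sub_self]) hm
  have hrest : diagCoord K n w l (f - f₁) ∈
      ((initialIdealW K n w J).restrictScalars K).map (deformation w J (l : K)) := by
    rcases e with _ | e
    · rw [support_eq_empty.mp (Finset.eq_empty_of_forall_notMem fun m hm => (hlt m hm).not_ge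
        (Nat.zero_le _)), map_zero]
      exact zero_mem _
    · exact ih e e.lt_succ_self ⟨hr.1, fun m hm => ⟨(hr.2 hm).1, Nat.lt_succ_iff.mp (hlt m hm)⟩⟩
  have h := add_mem hrest (diagCoord_initialLift_mem_map_deformation hg)
  rwa [← map_add, sub_add_cancel] at h

theorem diagCoord_mem_map_deformation (hJ : IsHomog K n J) (hf : f ∈ J) :
    diagCoord K n w l f ∈
      ((initialIdealW K n w J).restrictScalars K).map (deformation w J (l : K)) := by
  rw [← sum_homogeneousComponent f, map_sum]
  exact Submodule.sum_mem _ fun d _ => diagCoord_mem_map_deformation_of_mem_filteredPart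
    (homogeneousComponent_mem_filteredPart hJ hf (fun m hm => Finset.le_sup hm) d)

theorem exists_surjective_isGradedMap_coe_eq_deformation (hJ : IsHomog K n J) (l : Kˣ) :
    ∃ θ : initialIdealW K n w J →ₗ[K] Ideal.map (diagCoord K n w l) J,
      Function.Surjective θ ∧
      IsGradedMap (idealGrade K n (initialIdealW K n w J))
        (idealGrade K n (Ideal.map (diagCoord K n w l) J)) θ ∧
      ∀ g, (θ g : PS K n) = deformation w J l g := by
  let θ : initialIdealW K n w J →ₗ[K] Ideal.map (diagCoord K n w l) J :=
    LinearMap.restrict (p := (initialIdealW K n w J).restrictScalars K)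
      (q := (Ideal.map (diagCoord K n w l) J).restrictScalars K)
      (deformation w J (l : K)) fun g _ => deformation_mem_map_diagCoord g
  refine ⟨θ, fun x => ?_, fun d g hg => isGradedMap_deformation (l : K) hg, fun g => rfl⟩
  obtain ⟨f, hf, hx⟩ := mem_map_diagCoord.mp x.2
  obtain ⟨g, hg, h⟩ := diagCoord_mem_map_deformation (l := l) hJ hf
  exact ⟨⟨g, hg⟩, Subtype.ext (h.trans hx)⟩

end Family

end Deformation

section FinitelyGenerated

theorem exists_finset_homogeneous_span_eq_top {ι σ A P : Type*} [DecidableEq ι] [Semiring A]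
    [AddCommMonoid P] [Module A P] [SetLike σ P] [AddSubmonoidClass σ P] (G : ι → σ)
    [DirectSum.Decomposition G] [Module.Finite A P] :
    ∃ T : Finset (ι × P), (∀ t ∈ T, t.2 ∈ G t.1) ∧
      Submodule.span A (Prod.snd '' (T : Set (ι × P))) = ⊤ := by
  classical
  obtain ⟨s, hs⟩ := Module.Finite.fg_top (R := A) (M := P)
  refine ⟨s.biUnion fun x => (DirectSum.decompose G x).support.image fun d =>
    (d, (DirectSum.decompose G x d : P)), fun t ht => ?_, top_le_iff.mp ?_⟩
  · obtain ⟨x, -, d, -, rfl⟩ := by simpa only [Finset.mem_biUnion, Finset.mem_image] using ht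
    exact (DirectSum.decompose G x d).2
  · rw [← hs, Submodule.span_le]
    intro x hx
    rw [← DirectSum.sum_support_decompose G x]
    exact Submodule.sum_mem _ fun d hd => Submodule.subset_span
      ⟨_, Finset.mem_biUnion.mpr ⟨x, hx, Finset.mem_image_of_mem _ hd⟩, rfl⟩

variable {K} {n} {P : Type} [AddCommGroup P] [Module K P] [Module (PS K n) P]
  {GP : ℤ → Submodule K P} {T : Finset (ℤ × P)}

theorem gradedSMul_of_homogeneousSubmodule
    (hGP : ∀ (a : ℕ) (b : ℤ) (s : PS K n) (x : P),
      s ∈ homogeneousSubmodule (Fin n) K a → x ∈ GP b → s • x ∈ GP ((a : ℤ) + b)) :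
    SetLike.GradedSMul (polyGrade K n) GP where
  smul_mem a b s x hs hx := by
    rcases lt_or_ge a 0 with ha | ha
    · rw [polyGrade_eq_bot ha, Submodule.mem_bot] at hs
      rw [hs, zero_smul]
      exact zero_mem _
    · obtain ⟨a, rfl⟩ := Int.eq_ofNat_of_zero_le ha
      rw [polyGrade_natCast] at hs
      exact hGP a b s x hs hx

variable [IsScalarTower K (PS K n) P]

variable (K n T) in
/-- The degree-`d` part of the graded `S`-submodule generated by the elements `t.2` in degrees
`t.1`, for `t ∈ T`. -/
def gradedSpan (d : ℤ) : Submodule K P :=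
  ⨆ t ∈ T, (polyGrade K n (d - t.1)).map
    ((LinearMap.toSpanSingleton (PS K n) P t.2).restrictScalars K)

theorem smul_mem_iSup_gradedSpan {t : ℤ × P} (ht : t ∈ T) (s : PS K n) :
    s • t.2 ∈ ⨆ d, gradedSpan K n T d := by
  rw [← sum_homogeneousComponent s, Finset.sum_smul]
  refine Submodule.sum_mem _ fun e _ => Submodule.mem_iSup_of_mem (e + t.1) <|
    Submodule.mem_iSup_of_mem t <| Submodule.mem_iSup_of_mem ht ⟨_, ?_, rfl⟩
  rw [add_sub_cancel_right, polyGrade_natCast]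
  exact homogeneousComponent_isHomogeneous e s

theorem iSup_gradedSpan_eq_top
    (hT : Submodule.span (PS K n) (Prod.snd '' (T : Set (ℤ × P))) = ⊤) :
    ⨆ d, gradedSpan K n T d = ⊤ := by
  refine Submodule.eq_top_iff'.mpr fun x => ?_
  have hx : x ∈ Submodule.span (PS K n) (Prod.snd '' (T : Set (ℤ × P))) := hT ▸ Submodule.mem_top
  induction hx using Submodule.closure_induction with
  | zero => exact zero_mem _
  | add x y _ _ hx hy => exact add_mem hx hy
  | smul_mem s x hx =>
    obtain ⟨t, ht, rfl⟩ := hx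
    exact smul_mem_iSup_gradedSpan ht s

theorem gradedSpan_le [SetLike.GradedSMul (polyGrade K n) GP] (hT : ∀ t ∈ T, t.2 ∈ GP t.1)
    (d : ℤ) : gradedSpan K n T d ≤ GP d := by
  refine iSup₂_le fun t ht => Submodule.map_le_iff_le_comap.mpr fun s hs => ?_
  have h := SetLike.GradedSMul.smul_mem hs (hT t ht)
  rwa [vadd_eq_add, sub_add_cancel] at h

instance (d : ℤ) : FiniteDimensional K (gradedSpan K n T d) :=
  Module.Finite.iff_fg.mpr <| Submodule.fg_biSup _ _ fun t _ =>
    (Module.Finite.iff_fg.mp (isLocallyFiniteGrading_polyGrade.finiteDimensional (d - t.1))).map _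

theorem gradedSpan_eq_bot {d : ℤ} (hd : ∀ t ∈ T, d < t.1) : gradedSpan K n T d = ⊥ := by
  refine iSup₂_eq_bot.mpr fun t ht => ?_
  rw [polyGrade_eq_bot (sub_neg.mpr (hd t ht)), Submodule.map_bot]

variable (K n GP) in
theorem exists_isLocallyFiniteGrading [Module.Finite (PS K n) P] [DirectSum.Decomposition GP]
    [SetLike.GradedSMul (polyGrade K n) GP] : ∃ a, IsLocallyFiniteGrading GP a := by
  obtain ⟨T, hT, hspan⟩ := exists_finset_homogeneous_span_eq_top (A := PS K n) GP
  have hinternal := DirectSum.Decomposition.isInternal GP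
  have hGP : ∀ d, GP d = gradedSpan K n T d := fun d => by
    rw [← iSup_inf_eq_of_le hinternal.submodule_iSupIndep (gradedSpan_le hT),
      iSup_gradedSpan_eq_top hspan, top_inf_eq]
  obtain ⟨a, ha⟩ := (T.image Prod.fst).bddBelow
  refine ⟨a, hinternal, fun d => hGP d ▸ inferInstance, fun d hd => ?_⟩
  rw [hGP]
  exact gradedSpan_eq_bot fun t ht => hd.trans_le (ha (Finset.mem_image_of_mem _ ht))

end FinitelyGenerated

theorem tor_dim_initial_weight_ideal_ge_general (j : ℤ) (w : Fin n → ℕ)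
    (Mod : Type) [AddCommGroup Mod] [Module K Mod] [Module (PS K n) Mod]
    [IsScalarTower K (PS K n) Mod]
    (GMod : ℤ → Submodule K Mod) [SetLike.GradedSMul (polyGrade K n) GMod] {a : ℤ}
    (hMod : IsLocallyFiniteGrading GMod a) (J : Ideal (PS K n)) (hJ : IsHomog K n J) :
    generallyScalar K (fun l => ∀ i : ℕ,
      torStrandDim K n ↥(Ideal.map (diagCoord K n w l) J) Mod
          GMod (idealGrade K n (Ideal.map (diagCoord K n w l) J)) i j ≤
        torStrandDim K n ↥(initialIdealW K n w J) Mod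
          GMod (idealGrade K n (initialIdealW K n w J)) i j) := by
  obtain ⟨F, hF, hle⟩ := exists_torStrandDim_le hMod
    (isLocallyFiniteGrading_idealGrade (isHomog_initialIdealW hJ))
    (isPolynomialFamily_deformation.comp_right _) Subtype.val_injective
    (LinearMap.ext fun g => deformation_zero hJ g.2 :
      deformation w J 0 ∘ₗ (initialIdealW K n w J).subtype.restrictScalars K = _) j
  refine ⟨F, hF, fun l hl => ?_⟩
  obtain ⟨θ, hsurj, hgraded, hval⟩ := exists_surjective_isGradedMap_coe_eq_deformation hJ l
  exact hle l hl (isLocallyFiniteGrading_idealGrade (isHomog_map_diagCoord hJ l)) hsurj hgraded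
    (ι := (Ideal.map (diagCoord K n w l) J).subtype) (LinearMap.ext hval)

/-- **Corollary 2.5** (Caviglia–Murai): fix `j ∈ ℤ`, a weight `w ∈ ℤ_{≥0}^n`, a finitely
generated graded `S`-module `M` and a homogeneous ideal `J ⊆ S`.  For a general `λ ∈ K`,
`dim_K Tor_i(M, in_w(J))_j ≥ dim_K Tor_i(M, D_{λ,w}(J))_j` for all `i`. -/
theorem tor_dim_initial_weight_ideal_ge [Infinite K] (j : ℤ) (w : Fin n → ℕ)
    (Mod : Type) [AddCommGroup Mod] [Module K Mod] [Module (PS K n) Mod]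
    [IsScalarTower K (PS K n) Mod]
    (GMod : ℤ → Submodule K Mod) [DirectSum.Decomposition GMod]
    (hGMod : ∀ (a : ℕ) (b : ℤ) (s : PS K n) (x : Mod),
      s ∈ homogeneousSubmodule (Fin n) K a → x ∈ GMod b → s • x ∈ GMod ((a : ℤ) + b))
    (hModfg : Module.Finite (PS K n) Mod)
    (J : Ideal (PS K n)) (hJ : IsHomog K n J) :
    generallyScalar K (fun l => ∀ i : ℕ,
      torStrandDim K n ↥(Ideal.map (diagCoord K n w l) J) Mod
          GMod (idealGrade K n (Ideal.map (diagCoord K n w l) J)) i j ≤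
        torStrandDim K n ↥(initialIdealW K n w J) Mod
          GMod (idealGrade K n (initialIdealW K n w J)) i j) := by
  have := gradedSMul_of_homogeneousSubmodule hGMod
  obtain ⟨a, hMod⟩ := exists_isLocallyFiniteGrading K n GMod
  exact tor_dim_initial_weight_ideal_ge_general K n j w Mod GMod hMod J hJ

end
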